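/- Let n ≥ 2 be fixed and let (X_d)_{d≥1} be a unitarily invariant sequence of random positive semidefinite matrices X_d ∈ M_n(ℂ) ⊗ M_d(ℂ) converging strongly to a compactly supported probability measure μ with supp(μ) ⊆ [A,B] ⊆ [0,∞), mean m and variance σ². If A > (n²−2)(B−m) + 2σ√(n²−2), then almost surely, for all sufficiently large d, X_d ∈ SEP_{n,d}; in particular lim_{d→∞} P(X_d ∈ SEP_{n,d}) = 1. -/

import Mathlib

open MeasureTheory Filter Topology Polynomial Matrix Kronecker
open scoped ComplexOrder

noncomputable section

/-- Measurable space structure on matrices (entrywise). -/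
instance matMS (m n : Type*) : MeasurableSpace (Matrix m n ℂ) :=
  inferInstanceAs (MeasurableSpace (m → n → ℂ))

/-- The ℓ²→ℓ² operator norm of a complex square matrix. -/
def opNorm {N : Type*} [Fintype N] [DecidableEq N] (X : Matrix N N ℂ) : ℝ :=
  ‖Matrix.toEuclideanCLM (𝕜 := ℂ) (n := N) X‖

/-- Application of a real polynomial to a complex square matrix. -/
def polyApply {N : Type*} [Fintype N] [DecidableEq N] (P : Polynomial ℝ)
    (X : Matrix N N ℂ) : Matrix N N ℂ :=
  Polynomial.aeval X (P.map (algebraMap ℝ ℂ))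

/-- The (topological) support of a measure on ℝ: points all of whose open
neighbourhoods have positive measure. -/
def msupport (μ : Measure ℝ) : Set ℝ :=
  {x | ∀ U : Set ℝ, IsOpen U → x ∈ U → 0 < μ U}

/-- Strong convergence of a sequence of random matrices `X d ∈ M_n(ℂ) ⊗ M_d(ℂ)`
towards a compactly supported probability measure `μ`: almost surely, for every
real polynomial `P`, the normalized traces of `P(X d)` converge to `∫ P dμ` and the
operator norms of `P(X d)` converge to `sup {|P(x)| : x ∈ supp μ}`. -/
def StrongConv {Ω : Type*} [MeasurableSpace Ω] (ℙ : Measure Ω) (n : ℕ)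
    (X : (d : ℕ) → Ω → Matrix (Fin n × Fin d) (Fin n × Fin d) ℂ)
    (μ : Measure ℝ) : Prop :=
  ∀ᵐ ω ∂ℙ, ∀ P : Polynomial ℝ,
    Tendsto (fun d : ℕ => ((n : ℂ) * (d : ℂ))⁻¹ * (polyApply P (X d ω)).trace) atTop
      (𝓝 ((∫ x, P.eval x ∂μ : ℝ) : ℂ)) ∧
    Tendsto (fun d : ℕ => opNorm (polyApply P (X d ω))) atTop
      (𝓝 (sSup ((fun x => |P.eval x|) '' msupport μ)))

/-- Unitary invariance of a sequence of random matrices: for every `d` and every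
unitary `U`, the random matrix `U (X d) U*` has the same distribution as `X d`. -/
def UnitInv {Ω : Type*} [MeasurableSpace Ω] (ℙ : Measure Ω) (n : ℕ)
    (X : (d : ℕ) → Ω → Matrix (Fin n × Fin d) (Fin n × Fin d) ℂ) : Prop :=
  ∀ d : ℕ, ∀ U : Matrix (Fin n × Fin d) (Fin n × Fin d) ℂ,
    U ∈ unitary (Matrix (Fin n × Fin d) (Fin n × Fin d) ℂ) →
    Measure.map (fun ω => U * X d ω * star U) ℙ = Measure.map (X d) ℙ

/-- The separable cone `SEP_{n,d}`. -/
def SEP (n d : ℕ) : Set (Matrix (Fin n × Fin d) (Fin n × Fin d) ℂ) :=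
  {X | ∃ (k : ℕ) (A : Fin k → Matrix (Fin n) (Fin n) ℂ)
      (B : Fin k → Matrix (Fin d) (Fin d) ℂ),
    (∀ i, (A i).PosSemidef) ∧ (∀ i, (B i).PosSemidef) ∧ X = ∑ i, A i ⊗ₖ B i}

/-- The partial transpose on `M_n(ℂ) ⊗ M_d(ℂ)`: transposition of the first factor. -/
def ptrans {n d : ℕ} (X : Matrix (Fin n × Fin d) (Fin n × Fin d) ℂ) :
    Matrix (Fin n × Fin d) (Fin n × Fin d) ℂ :=
  fun p q => X (q.1, p.2) (p.1, q.2)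

/-- The PPT cone `PPT_{n,d}`: positive semidefinite matrices with positive
semidefinite partial transpose. -/
def PPT (n d : ℕ) : Set (Matrix (Fin n × Fin d) (Fin n × Fin d) ℂ) :=
  {X | X.PosSemidef ∧ (ptrans X).PosSemidef}

/-!
Let `red X = n (1 ⊗ Tr₁ X) - X`. Then `red Z` is separable for `Z ≥ 0`, and
`red (red X - (n² - 2) X) = (n² - 1) X`; hence `X` is separable as soon as `red X ≥ (n² - 2) X`.
It therefore suffices to bound the lower edge of the spectrum of `red X` by `(n² - 2) B`, that is,
to show that it is asymptotically at least `(n² - 1) m - (m - A) - 2 σ √(n² - 2)`.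

Differentiating the invariance of the law of `X` under conjugation shows that the derivations
`D_ij p = ∂/∂t p(X + t [E_ij, X])` of the algebra of polynomials in the entries of `X` satisfy
`E[conj (D_ij p) q] = E[conj p (D_ji q)]`. For a column `F` of such polynomials, with `N` the size
of `X`, the averaged divergence `Π F = N⁻¹ (∑ i, D_ij F_i)_j` is then a projection up to an error
`N⁻²` times the Dirichlet energy of `F`, and the compression by `1 - Π` of every polynomial in `X`
of trace zero vanishes up to the same error. So `Φ = F - Π F` satisfies `⟨Φ, X Φ⟩ ≈ m |Φ|²` and
`|(X - m) Φ|² ≈ σ² |Φ|²`, and with `X ≥ A` on the range of `Π` this bounds `⟨F, X F⟩` from below.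
Now `n ⟨F, (red X) F⟩` is the quadratic form of `X` at an array formed from copies of `F`, on which
`Π` is expressed by itself and by its analogue for the second tensor factor, again almost a
projection.

Taking for `F` the columns of `(K - red X) ^ q` with `q ∼ log d` turns the resulting bound on
`⟨F, (red X) F⟩` into a bound on high moments of `K - red X`, hence, by Markov's inequality, on
the probability that `red X` has an eigenvalue below the predicted edge; Borel-Cantelli concludes.
-/

section Derivations

variable {J R 𝔓 : Type*} [Fintype J] [CommRing 𝔓] [Algebra ℂ 𝔓]

/-- A family of derivations `D i j` satisfying the commutation relations of the matrix units of
(the opposite of) `gl J`, with the identity matrix acting trivially and with `D j i` adjoint to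
`D i j` for the form `(p, q) ↦ E (κ p * q)`, where `κ` is a conjugation. -/
structure GLAction [DecidableEq J] (κ : 𝔓 →+* 𝔓) (E : 𝔓 →ₗ[ℂ] ℂ)
    (D : J → J → Derivation ℂ 𝔓 𝔓) : Prop where
  adj : ∀ i j p q, E (κ (D i j p) * q) = E (κ p * D j i q)
  comm : ∀ i j l k p, D i j (D l k p) =
    D l k (D i j p) - (if j = l then D i k p else 0) + (if i = k then D l j p else 0)
  trace : ∀ p, ∑ i, D i i p = 0
  conj_smul : ∀ (a : ℂ) (p : 𝔓), κ (a • p) = star a • κ p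

/-- A Hermitian matrix `c` over the algebra on which `D i j` acts as the commutator with a matrix
unit, and whose own direction `∑ i k, c i k * D i k` acts trivially. -/
structure Equivariant [DecidableEq J] (κ : 𝔓 →+* 𝔓) (D : J → J → Derivation ℂ 𝔓 𝔓)
    (c : Matrix J J 𝔓) : Prop where
  deriv : ∀ i j p q, D i j (c p q) = (if i = p then c j q else 0) - (if j = q then c p i else 0)
  central : ∀ p, ∑ i, ∑ k, c i k * D i k p = 0
  herm : ∀ i k, κ (c i k) = c k i

/-- The sesquilinear form on rectangular arrays over the algebra induced by `E` and `κ`. -/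
def pairing [Fintype R] (κ : 𝔓 →+* 𝔓) (E : 𝔓 →ₗ[ℂ] ℂ) (G F : Matrix J R 𝔓) : ℂ :=
  ∑ r, ∑ j, E (κ (G j r) * F j r)

/-- The column-wise divergence `F ↦ (∑ i, D i j F_i)_j`. -/
def divOp (D : J → J → Derivation ℂ 𝔓 𝔓) (F : Matrix J R 𝔓) : Matrix J R 𝔓 :=
  Matrix.of fun j r => ∑ i, D i j (F i r)

/-- The divergence with coefficient matrix `c`, that is `F ↦ (∑ i k, c i k * D i j F_k)_j`. -/
def twistOp (D : J → J → Derivation ℂ 𝔓 𝔓) (c : Matrix J J 𝔓) (F : Matrix J R 𝔓) :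
    Matrix J R 𝔓 :=
  Matrix.of fun j r => ∑ i, ∑ k, c i k * D i j (F k r)

/-- The remainder form measuring how far `(card J)⁻¹ • divOp D` is from a projection. -/
def resid [Fintype R] (κ : 𝔓 →+* 𝔓) (E : 𝔓 →ₗ[ℂ] ℂ) (D : J → J → Derivation ℂ 𝔓 𝔓)
    (c : Matrix J J 𝔓) (G F : Matrix J R 𝔓) : ℂ :=
  ∑ r, ∑ j, ∑ l, ∑ i, ∑ k, E (κ (c k i * D k l (G j r)) * D i j (F l r))

/-- The divergence normalized by the size of the matrices. -/
def avgDiv (D : J → J → Derivation ℂ 𝔓 𝔓) (F : Matrix J R 𝔓) : Matrix J R 𝔓 :=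
  (Fintype.card J : ℂ)⁻¹ • divOp D F

variable {κ : 𝔓 →+* 𝔓} {E : 𝔓 →ₗ[ℂ] ℂ} {D : J → J → Derivation ℂ 𝔓 𝔓} {c : Matrix J J 𝔓}

lemma pairing_add_right [Fintype R] (G F F' : Matrix J R 𝔓) :
    pairing κ E G (F + F') = pairing κ E G F + pairing κ E G F' := by
  simp [pairing, mul_add, Finset.sum_add_distrib]

lemma pairing_sub_right [Fintype R] (G F F' : Matrix J R 𝔓) :
    pairing κ E G (F - F') = pairing κ E G F - pairing κ E G F' := by
  simp [pairing, mul_sub, Finset.sum_sub_distrib]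

lemma pairing_sub_left [Fintype R] (G G' F : Matrix J R 𝔓) :
    pairing κ E (G - G') F = pairing κ E G F - pairing κ E G' F := by
  simp [pairing, sub_mul, Finset.sum_sub_distrib]

lemma pairing_smul_right [Fintype R] (a : ℂ) (G F : Matrix J R 𝔓) :
    pairing κ E G (a • F) = a * pairing κ E G F := by
  simp [pairing, Finset.mul_sum]

lemma twistOp_smul (a : ℂ) (F : Matrix J R 𝔓) :
    twistOp D c (a • F) = a • twistOp D c F := by
  ext j r
  simp [twistOp, Finset.smul_sum]

lemma twistOp_sub (F G : Matrix J R 𝔓) :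
    twistOp D c (F - G) = twistOp D c F - twistOp D c G := by
  ext j r
  simp [twistOp, Finset.sum_sub_distrib, mul_sub]

variable [DecidableEq J]

lemma GLAction.pairing_smul_left [Fintype R] (h : GLAction κ E D) (a : ℂ) (G F : Matrix J R 𝔓) :
    pairing κ E (a • G) F = star a * pairing κ E G F := by
  simp [pairing, Finset.mul_sum, h.conj_smul]

lemma GLAction.pairing_divOp_left [Fintype R] (h : GLAction κ E D) (G F : Matrix J R 𝔓) :
    pairing κ E (divOp D G) F = pairing κ E G (divOp D F) := by
  simp only [pairing, divOp, Matrix.of_apply, map_sum, Finset.mul_sum, Finset.sum_mul, h.adj]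
  exact Finset.sum_congr rfl fun r _ => Finset.sum_comm

lemma GLAction.pairing_avgDiv_left [Fintype R] (h : GLAction κ E D) (G F : Matrix J R 𝔓) :
    pairing κ E (avgDiv D G) F = pairing κ E G (avgDiv D F) := by
  simp [avgDiv, h.pairing_smul_left, pairing_smul_right, h.pairing_divOp_left]

lemma twistOp_one (F : Matrix J R 𝔓) : twistOp D 1 F = divOp D F := by
  ext j r
  simp [twistOp, divOp, Matrix.one_apply]

lemma GLAction.equivariant_one (h : GLAction κ E D) : Equivariant κ D (1 : Matrix J J 𝔓) where
  deriv i j p q := by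
    have hD : D i j ((1 : Matrix J J 𝔓) p q) = 0 := by
      obtain rfl | hpq := eq_or_ne p q
      · simp
      · simp [Matrix.one_apply_ne hpq]
    rw [hD]
    simp only [Matrix.one_apply]
    by_cases hip : i = p <;> by_cases hjq : j = q <;> grind
  central p := by simpa [Matrix.one_apply] using h.trace p
  herm i k := by
    obtain rfl | hik := eq_or_ne i k
    · simp
    · simp [Matrix.one_apply_ne hik, Matrix.one_apply_ne hik.symm]

namespace Equivariant

lemma conj_trace (hc : Equivariant κ D c) : κ c.trace = c.trace := by
  simp [Matrix.trace, hc.herm]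

lemma sum_deriv (hc : Equivariant κ D c) (l i : J) :
    ∑ k, D k l (c k i) = (Fintype.card J : 𝔓) * c l i - (if l = i then c.trace else 0) := by
  simp only [hc.deriv, if_true, Finset.sum_sub_distrib]
  split_ifs <;> simp [Matrix.trace]

lemma divOp_mul (hc : Equivariant κ D c) (F : Matrix J R 𝔓) :
    divOp D (c * F) = (Fintype.card J : 𝔓) • (c * F) - c.trace • F + twistOp D c F := by
  ext j r
  have leibniz (i : J) : D i j ((c * F) i r) =
      ∑ k, (c j k * F k r - (if j = k then c i i * F k r else 0) + c i k * D i j (F k r)) := by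
    rw [Matrix.mul_apply, map_sum]
    refine Finset.sum_congr rfl fun k _ => ?_
    rw [Derivation.leibniz, hc.deriv, if_pos rfl]
    split_ifs <;> simp <;> ring
  simp only [divOp, Matrix.of_apply, leibniz, Matrix.add_apply, Matrix.sub_apply,
    Matrix.smul_apply, twistOp, Finset.sum_add_distrib, Finset.sum_sub_distrib]
  simp [Matrix.mul_apply, Matrix.trace, Finset.sum_mul]

lemma twistOp_divOp_apply (hc : Equivariant κ D c) (h : GLAction κ E D) (F : Matrix J R 𝔓)
    (j : J) (r : R) :
    twistOp D c (divOp D F) j r =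
      ∑ l, ∑ i, ∑ k, c i k * D l k (D i j (F l r)) + c.trace * divOp D F j r := by
  have commute (i k : J) : c i k * D i j (divOp D F k r) =
      ∑ l, (c i k * D l k (D i j (F l r)) - (if j = l then c i k * D i k (F l r) else 0)
        + (if i = k then c i k * D l j (F l r) else 0)) := by
    simp only [divOp, Matrix.of_apply, map_sum, Finset.mul_sum]
    refine Finset.sum_congr rfl fun l _ => ?_
    rw [h.comm]
    split_ifs <;> ring
  simp only [twistOp, Matrix.of_apply, commute, Finset.sum_add_distrib, Finset.sum_sub_distrib,
    Finset.sum_ite_eq, Finset.mem_univ, if_true, hc.central, sub_zero]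
  congr 1
  · rw [Finset.sum_congr rfl fun i _ => Finset.sum_comm, Finset.sum_comm]
  · rw [Finset.sum_congr rfl fun i _ => Finset.sum_comm]
    simp [divOp, Matrix.trace, Finset.sum_mul_sum]

lemma apply_conj_mul_deriv (hc : Equivariant κ D c) (h : GLAction κ E D) (i k l : J) (p q : 𝔓) :
    E (κ p * (c i k * D l k q)) =
      E (κ (c k i * D k l p) * q) + E (κ (p * D k l (c k i)) * q) := by
  have leibniz : c k i * D k l p + p * D k l (c k i) = D k l (c k i * p) := by
    rw [Derivation.leibniz, smul_eq_mul, smul_eq_mul]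
  rw [← map_add, ← add_mul, ← map_add, leibniz, h.adj, map_mul κ, hc.herm]
  congr 1
  ring

lemma sum_apply_conj_mul_deriv (hc : Equivariant κ D c) (l i : J) (p q : 𝔓) :
    ∑ k, E (κ (p * D k l (c k i)) * q) =
      Fintype.card J * E (κ p * (c i l * q)) - if l = i then E (κ p * (c.trace * q)) else 0 := by
  rw [← map_sum, ← Finset.sum_mul, ← map_sum, ← Finset.mul_sum, hc.sum_deriv, mul_sub, map_sub,
    sub_mul, map_sub]
  congr 1
  · rw [map_mul κ, map_mul κ, hc.herm, map_natCast κ, ← smul_eq_mul (Fintype.card J : ℂ),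
      ← map_smul, Algebra.smul_def, map_natCast]
    congr 1
    ring
  · split_ifs
    · rw [map_mul κ, hc.conj_trace, mul_assoc]
    · simp

-- Integrating `D l k` by parts in `twistOp_divOp_apply` produces `resid` when it falls on the left
-- factor; when it falls on `c`, the two trace terms cancel and `card J` copies of `c` remain.
lemma pairing_twistOp_divOp [Fintype R] (hc : Equivariant κ D c) (h : GLAction κ E D)
    (G F : Matrix J R 𝔓) :
    pairing κ E G (twistOp D c (divOp D F)) =
      Fintype.card J * pairing κ E G (twistOp D c F) + resid κ E D c G F := by
  simp only [pairing, resid, Finset.mul_sum, ← Finset.sum_add_distrib]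
  refine Finset.sum_congr rfl fun r _ => Finset.sum_congr rfl fun j _ => ?_
  rw [hc.twistOp_divOp_apply h, mul_add, map_add]
  simp only [Finset.mul_sum, map_sum, hc.apply_conj_mul_deriv h, Finset.sum_add_distrib,
    hc.sum_apply_conj_mul_deriv, Finset.sum_sub_distrib, Finset.sum_ite_eq, Finset.mem_univ,
    if_true, divOp, twistOp, Matrix.of_apply]
  rw [Finset.sum_comm (f := fun l i => (Fintype.card J : ℂ) * E (κ (G j r) * _))]
  ring

end Equivariant

variable [Nonempty J]

lemma GLAction.pairing_avgDiv_self [Fintype R] (h : GLAction κ E D) (F : Matrix J R 𝔓) :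
    pairing κ E (avgDiv D F) (avgDiv D F) =
      pairing κ E F (avgDiv D F) + ((Fintype.card J : ℂ)⁻¹) ^ 2 * resid κ E D 1 F F := by
  have hN : (Fintype.card J : ℂ) ≠ 0 := by simp
  have key := h.equivariant_one.pairing_twistOp_divOp h F F
  rw [twistOp_one, twistOp_one] at key
  rw [avgDiv, h.pairing_smul_left, pairing_smul_right, h.pairing_divOp_left, key,
    pairing_smul_right, star_inv₀, star_natCast]
  field_simp

lemma Equivariant.pairing_sub_avgDiv_mul [Fintype R] (hc : Equivariant κ D c)
    (h : GLAction κ E D) (htr : c.trace = 0) (F : Matrix J R 𝔓) :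
    pairing κ E (F - avgDiv D F) (c * (F - avgDiv D F)) =
      ((Fintype.card J : ℂ)⁻¹) ^ 2 * resid κ E D c F F := by
  have hN : (Fintype.card J : ℂ) ≠ 0 := by simp
  have key := hc.pairing_twistOp_divOp h F F
  have hsmul (G : Matrix J R 𝔓) : (Fintype.card J : 𝔓) • G = (Fintype.card J : ℂ) • G := by
    ext i r
    simp [Algebra.smul_def]
  rw [pairing_sub_left, h.pairing_avgDiv_left]
  simp only [avgDiv, pairing_smul_right, hc.divOp_mul, htr, hsmul, zero_smul, sub_zero,
    pairing_add_right, twistOp_sub, twistOp_smul, pairing_sub_right, key]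
  field_simp
  ring

end Derivations

section Model

/-- Polynomials in the entries of a square matrix. -/
abbrev EntryPoly (I : Type*) := MvPolynomial (I × I) ℂ

/-- The generic matrix, whose entries are the indeterminates. -/
abbrev genMat (I : Type*) : Matrix I I (EntryPoly I) := Matrix.mvPolynomialX I I ℂ

/-- Evaluation of a polynomial in the entries at a matrix. -/
def evalAt {I : Type*} (x : Matrix I I ℂ) : EntryPoly I →ₐ[ℂ] ℂ :=
  MvPolynomial.aeval fun p => x p.1 p.2

/-- The conjugation of polynomials which corresponds to complex conjugation of their values at
Hermitian matrices. -/
def conjPoly (I : Type*) : EntryPoly I →+* EntryPoly I :=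
  (MvPolynomial.rename Prod.swap : EntryPoly I →ₐ[ℂ] EntryPoly I).toRingHom.comp
    (MvPolynomial.map (starRingEnd ℂ))

/-- The derivation sending the generic matrix `x` to its commutator `e x - x e` with the matrix
unit `e = Matrix.single i j 1`. -/
def unitDer {I : Type*} [DecidableEq I] (i j : I) : Derivation ℂ (EntryPoly I) (EntryPoly I) :=
  MvPolynomial.mkDerivation ℂ fun p =>
    (if i = p.1 then MvPolynomial.X (j, p.2) else 0) -
      (if j = p.2 then MvPolynomial.X (p.1, i) else 0)

section Conjugation

variable {I : Type*}

lemma conjPoly_X (p : I × I) : conjPoly I (MvPolynomial.X p) = MvPolynomial.X p.swap := by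
  simp [conjPoly]

lemma conjPoly_C (a : ℂ) : conjPoly I (MvPolynomial.C a) = MvPolynomial.C (star a) := by
  simp [conjPoly]

lemma conjPoly_smul (a : ℂ) (p : EntryPoly I) : conjPoly I (a • p) = star a • conjPoly I p := by
  simp [MvPolynomial.smul_eq_C_mul, conjPoly_C]

lemma evalAt_conjPoly {x : Matrix I I ℂ} (hx : x.IsHermitian) (p : EntryPoly I) :
    evalAt x (conjPoly I p) = star (evalAt x p) := by
  induction p using MvPolynomial.induction_on with
  | C a => simp [evalAt, conjPoly_C]
  | add p q hp hq => simp only [map_add, hp, hq, star_add]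
  | mul_X p v hp =>
    rw [map_mul, map_mul, hp, map_mul, star_mul']
    congr 1
    simp [evalAt, conjPoly_X, ← hx.apply v.2 v.1]

end Conjugation

section UnitDer

variable {I : Type*} [DecidableEq I]

lemma unitDer_X (i j : I) (p : I × I) : unitDer i j (MvPolynomial.X p) =
    (if i = p.1 then MvPolynomial.X (j, p.2) else 0) -
      (if j = p.2 then MvPolynomial.X (p.1, i) else 0) := by
  simp [unitDer]

lemma conjPoly_unitDer (i j : I) (p : EntryPoly I) :
    conjPoly I (unitDer i j p) = - unitDer j i (conjPoly I p) := by
  induction p using MvPolynomial.induction_on with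
  | C a => simp [conjPoly_C]
  | add p q hp hq =>
    simp only [map_add, hp, hq]
    ring
  | mul_X p v hp =>
    have hX : conjPoly I (unitDer i j (MvPolynomial.X v)) =
        - unitDer j i (MvPolynomial.X v.swap) := by
      simp only [unitDer_X, map_sub, Prod.fst_swap, Prod.snd_swap, neg_sub, apply_ite (conjPoly I),
        map_zero, conjPoly_X, Prod.swap_prod_mk]
    simp only [Derivation.leibniz, smul_eq_mul, map_add, map_mul, hp, hX, conjPoly_X]
    ring

lemma lie_unitDer_unitDer (i j l k : I) :
    ⁅unitDer i j, unitDer l k⁆ =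
      (if i = k then unitDer l j else 0) - (if j = l then unitDer i k else 0) := by
  refine MvPolynomial.derivation_ext fun ⟨a, b⟩ => ?_
  have apply_ite_X (P : Prop) [Decidable P] (D D' : Derivation ℂ (EntryPoly I) (EntryPoly I)) :
      (if P then D else D') (MvPolynomial.X (a, b)) =
        if P then D (MvPolynomial.X (a, b)) else D' (MvPolynomial.X (a, b)) := by
    split_ifs <;> rfl
  simp only [Derivation.commutator_apply, Derivation.sub_apply, apply_ite_X,
    Derivation.zero_apply, unitDer_X, map_sub, apply_ite (unitDer i j), apply_ite (unitDer l k),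
    map_zero]
  grind

lemma unitDer_comm (i j l k : I) (p : EntryPoly I) :
    unitDer i j (unitDer l k p) = unitDer l k (unitDer i j p)
      - (if j = l then unitDer i k p else 0) + (if i = k then unitDer l j p else 0) := by
  have hlie := DFunLike.congr_fun (lie_unitDer_unitDer i j l k) p
  rw [Derivation.commutator_apply, Derivation.sub_apply] at hlie
  split_ifs at hlie ⊢ <;> grind [Derivation.zero_apply]

end UnitDer

variable {I : Type*} [Fintype I] [DecidableEq I]

lemma sum_mul_unitDer_of_commute {c : Matrix I I (EntryPoly I)} (hc : Commute c (genMat I))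
    (p : EntryPoly I) : ∑ i, ∑ k, c i k * unitDer i k p = 0 := by
  have hX (v : I × I) : ∑ i, ∑ k, c i k * unitDer i k (MvPolynomial.X v) = 0 := by
    obtain ⟨a, b⟩ := v
    have hab := congrFun (congrFun hc.eq a) b
    simp only [Matrix.mul_apply, Matrix.mvPolynomialX_apply] at hab
    simp only [unitDer_X, mul_sub, Finset.sum_sub_distrib, mul_ite, mul_zero]
    rw [Finset.sum_comm]
    simp only [Finset.sum_ite_eq', Finset.mem_univ, if_true, hab]
    simp [mul_comm]
  induction p using MvPolynomial.induction_on with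
  | C a => simp
  | add p q hp hq => simp only [map_add, mul_add, Finset.sum_add_distrib, hp, hq, add_zero]
  | mul_X p v hp =>
    simp only [Derivation.leibniz, smul_eq_mul, mul_add, mul_left_comm (c _ _),
      Finset.sum_add_distrib, ← Finset.mul_sum, hp, hX, mul_zero, add_zero]

lemma sum_unitDer_self (p : EntryPoly I) : ∑ i, unitDer i i p = 0 := by
  simpa [Matrix.one_apply] using
    sum_mul_unitDer_of_commute (c := (1 : Matrix I I (EntryPoly I))) (Commute.one_left _) p

lemma map_derivation_mul {J K L 𝔓 : Type*} [Fintype K] [CommRing 𝔓] [Algebra ℂ 𝔓]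
    (D : Derivation ℂ 𝔓 𝔓) (b : Matrix J K 𝔓) (c : Matrix K L 𝔓) :
    (b * c).map D = b.map D * c + b * c.map D := by
  ext i j
  simp only [Matrix.map_apply, Matrix.mul_apply, map_sum, Derivation.leibniz, smul_eq_mul,
    Matrix.add_apply, ← Finset.sum_add_distrib]
  exact Finset.sum_congr rfl fun k _ => by ring

/-- The matrices of polynomials that transform like the generic matrix: `unitDer i j` acts on them
as the commutator with the matrix unit. -/
def ActsByCommutator (c : Matrix I I (EntryPoly I)) : Prop :=
  ∀ i j, c.map (unitDer i j) = Matrix.single i j 1 * c - c * Matrix.single i j 1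

lemma actsByCommutator_genMat : ActsByCommutator (genMat I) := by
  intro i j
  ext p q
  rw [Matrix.map_apply, Matrix.sub_apply, Matrix.mul_apply, Matrix.mul_apply]
  simp [unitDer_X, Matrix.single_apply, ite_and]

lemma actsByCommutator_smul_one {t : EntryPoly I} (ht : ∀ i j, unitDer i j t = 0) :
    ActsByCommutator (t • (1 : Matrix I I (EntryPoly I))) := by
  intro i j
  have hmap : (t • (1 : Matrix I I (EntryPoly I))).map (unitDer i j) = 0 := by
    ext p q
    by_cases hpq : p = q <;> simp [hpq, ht]
  rw [hmap]
  simp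

namespace ActsByCommutator

variable {b c : Matrix I I (EntryPoly I)}

lemma apply (hc : ActsByCommutator c) (i j p q : I) :
    unitDer i j (c p q) = (if i = p then c j q else 0) - (if j = q then c p i else 0) := by
  have hpq := congrFun (congrFun (hc i j) p) q
  rw [Matrix.map_apply] at hpq
  rw [hpq, Matrix.sub_apply, Matrix.mul_apply, Matrix.mul_apply]
  simp [Matrix.single_apply, ite_and]

lemma mul (hb : ActsByCommutator b) (hc : ActsByCommutator c) : ActsByCommutator (b * c) := by
  intro i j
  rw [map_derivation_mul, hb, hc]
  noncomm_ring

lemma sub (hb : ActsByCommutator b) (hc : ActsByCommutator c) : ActsByCommutator (b - c) := by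
  intro i j
  rw [Matrix.map_sub _ (map_sub _), hb, hc]
  noncomm_ring

lemma unitDer_trace (hc : ActsByCommutator c) (i j : I) : unitDer i j c.trace = 0 := by
  simp [Matrix.trace, hc.apply]

end ActsByCommutator

/-- The normalized trace of a matrix of polynomials. -/
def normTr (c : Matrix I I (EntryPoly I)) : EntryPoly I := (Fintype.card I : ℂ)⁻¹ • c.trace

/-- The part of normalized trace zero of a matrix of polynomials. -/
def centred (c : Matrix I I (EntryPoly I)) : Matrix I I (EntryPoly I) :=
  c - normTr c • (1 : Matrix I I (EntryPoly I))

lemma trace_centred [Nonempty I] (c : Matrix I I (EntryPoly I)) : (centred c).trace = 0 := by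
  have hN : (Fintype.card I : ℂ) ≠ 0 := by simp
  have hcard : ((Fintype.card I : ℕ) : EntryPoly I) = MvPolynomial.C (Fintype.card I : ℂ) := by
    simp
  rw [centred, Matrix.trace_sub, Matrix.trace_smul, Matrix.trace_one, normTr, hcard, smul_assoc,
    smul_eq_mul, mul_comm, ← MvPolynomial.smul_eq_C_mul, inv_smul_smul₀ hN, sub_self]

/-- The matrices of polynomials that behave like a real polynomial function of the generic
Hermitian matrix. -/
structure Spectral (c : Matrix I I (EntryPoly I)) : Prop where
  acts : ActsByCommutator c
  commute : Commute c (genMat I)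
  herm : ∀ i k, conjPoly I (c i k) = c k i

lemma spectral_genMat : Spectral (genMat I) where
  acts := actsByCommutator_genMat
  commute := Commute.refl _
  herm i k := by simp [conjPoly_X]

namespace Spectral

variable {c : Matrix I I (EntryPoly I)}

lemma equivariant (hc : Spectral c) : Equivariant (conjPoly I) unitDer c where
  deriv := hc.acts.apply
  central := sum_mul_unitDer_of_commute hc.commute
  herm := hc.herm

lemma conjPoly_normTr (hc : Spectral c) : conjPoly I (normTr c) = normTr c := by
  simp [normTr, conjPoly_smul, Matrix.trace, hc.herm]

lemma centred (hc : Spectral c) : Spectral (centred c) where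
  acts := hc.acts.sub (actsByCommutator_smul_one fun i j => by
    rw [normTr, Derivation.map_smul, hc.acts.unitDer_trace, smul_zero])
  commute := hc.commute.sub_left ((Commute.one_left _).smul_left _)
  herm i k := by
    rcases eq_or_ne i k with rfl | hik
    · simp [_root_.centred, hc.conjPoly_normTr, hc.herm]
    · simp [_root_.centred, hc.herm, hik, hik.symm]

lemma sq (hc : Spectral c) : Spectral (c * c) where
  acts := hc.acts.mul hc.acts
  commute := hc.commute.mul_left hc.commute
  herm i k := by
    simp only [Matrix.mul_apply, map_sum, map_mul, hc.herm]
    exact Finset.sum_congr rfl fun _ _ => mul_comm _ _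

end Spectral

end Model

section Expectation

open scoped Matrix.Norms.L2Operator ComplexStarModule

section EvalAt

variable {I : Type*}

lemma evalAt_X (x : Matrix I I ℂ) (v : I × I) : evalAt x (MvPolynomial.X v) = x v.1 v.2 := by
  simp [evalAt]

lemma measurable_entry (i j : I) : Measurable fun x : Matrix I I ℂ => x i j :=
  (measurable_pi_apply j).comp (measurable_pi_apply i)

lemma measurable_evalAt (p : EntryPoly I) : Measurable fun x : Matrix I I ℂ => evalAt x p := by
  induction p using MvPolynomial.induction_on with
  | C a => simp [evalAt]
  | add p q hp hq =>
    simp only [map_add]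
    exact hp.add hq
  | mul_X p v hp =>
    simp only [map_mul, evalAt_X]
    exact hp.mul (measurable_entry v.1 v.2)

end EvalAt

variable {I : Type*} [Fintype I]

lemma measurable_mul_mul (a b : Matrix I I ℂ) : Measurable fun x : Matrix I I ℂ => a * x * b := by
  refine measurable_pi_iff.2 fun i => measurable_pi_iff.2 fun j => ?_
  simp only [Matrix.mul_apply]
  exact Finset.measurable_sum _ fun k _ => Measurable.mul_const
    (Finset.measurable_sum _ fun l _ => (measurable_entry l k).const_mul _) _

variable [DecidableEq I]

lemma norm_entry_le_l2_opNorm (x : Matrix I I ℂ) (i j : I) : ‖x i j‖ ≤ ‖x‖ := by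
  have hcol := Matrix.l2_opNorm_mulVec x (EuclideanSpace.single j 1)
  have hentry := PiLp.norm_apply_le
    (WithLp.toLp 2 (x *ᵥ (EuclideanSpace.single j (1 : ℂ)).ofLp)) i
  simp only [PiLp.norm_single, norm_one, mul_one] at hcol
  simpa using hentry.trans hcol

lemma norm_conj_of_mem_unitary {U : Matrix I I ℂ} (hU : U ∈ unitary (Matrix I I ℂ))
    (x : Matrix I I ℂ) : ‖U * x * star U‖ = ‖x‖ := by
  rw [CStarRing.norm_mul_mem_unitary _ (Unitary.star_mem hU), CStarRing.norm_mem_unitary_mul _ hU]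

lemma exists_norm_evalAt_le (r : ℝ) (p : EntryPoly I) :
    ∃ C : ℝ, ∀ x : Matrix I I ℂ, ‖x‖ ≤ r → ‖evalAt x p‖ ≤ C := by
  induction p using MvPolynomial.induction_on with
  | C a => exact ⟨‖a‖, fun x _ => by simp [evalAt]⟩
  | add p q hp hq =>
    obtain ⟨C, hC⟩ := hp
    obtain ⟨C', hC'⟩ := hq
    refine ⟨C + C', fun x hx => ?_⟩
    rw [map_add]
    exact (norm_add_le _ _).trans (add_le_add (hC x hx) (hC' x hx))
  | mul_X p v hp =>
    obtain ⟨C, hC⟩ := hp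
    refine ⟨C * r, fun x hx => ?_⟩
    rw [map_mul, norm_mul, evalAt_X]
    exact mul_le_mul (hC x hx) ((norm_entry_le_l2_opNorm x v.1 v.2).trans hx) (norm_nonneg _)
      ((norm_nonneg _).trans (hC x hx))

lemma derivation_sum_apply {K 𝔓 : Type*} [CommRing 𝔓] [Algebra ℂ 𝔓] (s : Finset K)
    (D : K → Derivation ℂ 𝔓 𝔓) (p : 𝔓) : (∑ k ∈ s, D k) p = ∑ k ∈ s, D k p :=
  (congrFun (map_sum Derivation.coeFnAddMonoidHom D s) p).trans (Finset.sum_apply _ _ _)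

/-- The derivation sending the generic matrix `x` to its commutator `H x - x H` with a fixed
matrix `H`, as a linear function of `H`. -/
def matDer : Matrix I I ℂ →ₗ[ℂ] Derivation ℂ (EntryPoly I) (EntryPoly I) where
  toFun H := ∑ i, ∑ j, H i j • unitDer i j
  map_add' H K := by simp [add_smul, Finset.sum_add_distrib]
  map_smul' a H := by simp [Finset.smul_sum, smul_smul]

lemma matDer_apply (H : Matrix I I ℂ) (p : EntryPoly I) :
    matDer H p = ∑ i, ∑ j, H i j • unitDer i j p := by
  simp [matDer, derivation_sum_apply]

lemma matDer_single (i j : I) : matDer (Matrix.single i j 1) = unitDer i j := by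
  simp only [matDer, LinearMap.coe_mk, AddHom.coe_mk, Matrix.single_apply, ite_and, ite_smul,
    one_smul, zero_smul]
  simp

lemma evalAt_matDer_X (H x : Matrix I I ℂ) (v : I × I) :
    evalAt x (matDer H (MvPolynomial.X v)) = (H * x - x * H) v.1 v.2 := by
  simp only [matDer_apply, map_sum, map_smul, unitDer_X, map_sub, apply_ite (evalAt x), map_zero,
    smul_eq_mul, mul_sub, Finset.sum_sub_distrib, mul_ite, mul_zero]
  rw [Finset.sum_comm, Matrix.sub_apply, Matrix.mul_apply, Matrix.mul_apply]
  simp [evalAt, mul_comm]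

lemma hasDerivAt_evalAt {Y : ℝ → Matrix I I ℂ} {H : Matrix I I ℂ} {t : ℝ}
    (hY : HasDerivAt Y (H * Y t - Y t * H) t) (p : EntryPoly I) :
    HasDerivAt (fun s => evalAt (Y s) p) (evalAt (Y t) (matDer H p)) t := by
  induction p using MvPolynomial.induction_on with
  | C a => simpa [evalAt] using hasDerivAt_const t a
  | add p q hp hq =>
    simp only [map_add]
    exact hp.add hq
  | mul_X p v hp =>
    have hentry : HasDerivAt (fun s => Y s v.1 v.2) ((H * Y t - Y t * H) v.1 v.2) t :=
      (LinearMap.toContinuousLinearMap (Matrix.entryLinearMap ℝ ℂ v.1 v.2 :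
        Matrix I I ℂ →ₗ[ℝ] ℂ)).hasFDerivAt.comp_hasDerivAt t hY
    rw [Derivation.leibniz, map_add, smul_eq_mul, map_mul, smul_eq_mul, map_mul, evalAt_matDer_X]
    simp only [map_mul, evalAt_X]
    exact (hp.mul hentry).congr_deriv (by ring)

/-- The orbit `t ↦ e^{tH} x (e^{tH})*` of a matrix `x` under the one-parameter group generated
by `H`. -/
def conjFlow (H : Matrix I I ℂ) (t : ℝ) (x : Matrix I I ℂ) : Matrix I I ℂ :=
  NormedSpace.exp (t • H) * x * star (NormedSpace.exp (t • H))

lemma conjFlow_zero (H x : Matrix I I ℂ) : conjFlow H 0 x = x := by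
  simp [conjFlow]

lemma exp_smul_mem_unitary {H : Matrix I I ℂ} (hH : H ∈ skewAdjoint (Matrix I I ℂ)) (t : ℝ) :
    NormedSpace.exp (t • H) ∈ unitary (Matrix I I ℂ) :=
  let : NormedAlgebra ℚ (Matrix I I ℂ) := NormedAlgebra.restrictScalars ℚ ℂ _
  NormedSpace.exp_mem_unitary_of_mem_skewAdjoint (skewAdjoint.smul_mem t hH)

lemma hasDerivAt_conjFlow {H : Matrix I I ℂ} (hH : H ∈ skewAdjoint (Matrix I I ℂ)) (t : ℝ)
    (x : Matrix I I ℂ) :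
    HasDerivAt (fun s => conjFlow H s x) (H * conjFlow H t x - conjFlow H t x * H) t := by
  let : NormedAlgebra ℚ (Matrix I I ℂ) := NormedAlgebra.restrictScalars ℚ ℂ _
  have hstar (s : ℝ) : star (NormedSpace.exp (s • H)) = NormedSpace.exp (s • (-H)) := by
    rw [NormedSpace.star_exp, star_smul, skewAdjoint.mem_iff.mp hH, star_trivial]
  simp only [conjFlow, hstar]
  refine (((hasDerivAt_exp_smul_const' H t).mul_const x).mul
    (hasDerivAt_exp_smul_const (-H) t)).congr_deriv ?_
  noncomm_ring

/-- Unitarily invariant measures concentrated on Hermitian matrices of norm at most `r`. -/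
structure InvMeasure (ν : Measure (Matrix I I ℂ)) (r : ℝ) : Prop where
  herm : ∀ᵐ x ∂ν, x.IsHermitian
  bdd : ∀ᵐ x ∂ν, ‖x‖ ≤ r
  inv : ∀ U ∈ unitary (Matrix I I ℂ), ν.map (fun x => U * x * star U) = ν

namespace InvMeasure

variable {ν : Measure (Matrix I I ℂ)} {r : ℝ}

lemma integral_conjFlow (h : InvMeasure ν r) {H : Matrix I I ℂ}
    (hH : H ∈ skewAdjoint (Matrix I I ℂ)) (t : ℝ) (p : EntryPoly I) :
    ∫ x, evalAt (conjFlow H t x) p ∂ν = ∫ x, evalAt x p ∂ν := by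
  conv_rhs => rw [← h.inv _ (exp_smul_mem_unitary hH t)]
  rw [integral_map (measurable_mul_mul _ _).aemeasurable
    (measurable_evalAt p).aestronglyMeasurable]
  rfl

variable [IsFiniteMeasure ν]

lemma integrable (h : InvMeasure ν r) (p : EntryPoly I) :
    Integrable (fun x => evalAt x p) ν := by
  obtain ⟨C, hC⟩ := exists_norm_evalAt_le r p
  exact Integrable.of_bound (measurable_evalAt p).aestronglyMeasurable C
    (h.bdd.mono fun x hx => hC x hx)

/-- Expectation of polynomials in the entries. -/
def expect (h : InvMeasure ν r) : EntryPoly I →ₗ[ℂ] ℂ where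
  toFun p := ∫ x, evalAt x p ∂ν
  map_add' p q := by
    simp only [map_add]
    exact integral_add (h.integrable p) (h.integrable q)
  map_smul' a p := by
    simp only [map_smul, RingHom.id_apply]
    exact integral_smul a _

-- The expectation of `p` is constant along the flow generated by `H`.
lemma expect_matDer_of_mem_skewAdjoint (h : InvMeasure ν r) {H : Matrix I I ℂ}
    (hH : H ∈ skewAdjoint (Matrix I I ℂ)) (p : EntryPoly I) : h.expect (matDer H p) = 0 := by
  obtain ⟨C, hC⟩ := exists_norm_evalAt_le r (matDer H p)
  have hmeas (t : ℝ) (q : EntryPoly I) :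
      AEStronglyMeasurable (fun x => evalAt (conjFlow H t x) q) ν :=
    ((measurable_evalAt q).comp (measurable_mul_mul _ _)).aestronglyMeasurable
  have hbound : ∀ᵐ x ∂ν, ∀ t ∈ Set.univ, ‖evalAt (conjFlow H t x) (matDer H p)‖ ≤ C :=
    h.bdd.mono fun x hx t _ =>
      hC _ ((norm_conj_of_mem_unitary (exp_smul_mem_unitary hH t) x).trans_le hx)
  have hderiv := (hasDerivAt_integral_of_dominated_loc_of_deriv_le (μ := ν) (𝕜 := ℝ) (x₀ := 0)
    (bound := fun _ => C) univ_mem (Eventually.of_forall fun t => hmeas t p)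
    (by simpa only [conjFlow_zero] using h.integrable p) (hmeas 0 (matDer H p)) hbound
    (integrable_const C)
    (Eventually.of_forall fun x t _ => hasDerivAt_evalAt (hasDerivAt_conjFlow hH t x) p)).2
  simp only [h.integral_conjFlow hH] at hderiv
  exact hderiv.unique (hasDerivAt_const (0 : ℝ) (∫ x, evalAt x p ∂ν))

lemma expect_matDer (h : InvMeasure ν r) (H : Matrix I I ℂ) (p : EntryPoly I) :
    h.expect (matDer H p) = 0 := by
  have hself (K : selfAdjoint (Matrix I I ℂ)) : h.expect (matDer (K : Matrix I I ℂ) p) = 0 := by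
    have hskew : Complex.I • (K : Matrix I I ℂ) ∈ skewAdjoint (Matrix I I ℂ) := by
      rw [skewAdjoint.mem_iff, star_smul, selfAdjoint.mem_iff.mp K.2]
      simp
    simpa using h.expect_matDer_of_mem_skewAdjoint hskew p
  rw [← realPart_add_I_smul_imaginaryPart H]
  simp [hself]

lemma glAction (h : InvMeasure ν r) : GLAction (conjPoly I) h.expect (unitDer (I := I)) where
  adj i j p q := by
    have hparts := h.expect_matDer (Matrix.single j i 1) (conjPoly I p * q)
    rw [matDer_single, Derivation.leibniz, map_add, smul_eq_mul, smul_eq_mul] at hparts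
    rw [conjPoly_unitDer, neg_mul, map_neg, mul_comm (unitDer j i _) q]
    linear_combination -hparts
  comm := unitDer_comm
  trace := sum_unitDer_self
  conj_smul := conjPoly_smul

end InvMeasure

end Expectation

section Estimates

open scoped Matrix.Norms.L2Operator

/-- Entrywise evaluation of a matrix of polynomials. -/
def evalMat {I K L : Type*} (x : Matrix I I ℂ) (F : Matrix K L (EntryPoly I)) : Matrix K L ℂ :=
  F.map (evalAt x)

/-- The normalized trace of a complex matrix. -/
def ntr {I : Type*} [Fintype I] (x : Matrix I I ℂ) : ℂ := (Fintype.card I : ℂ)⁻¹ * x.trace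

section EvalMat

variable {I K L M : Type*}

lemma evalMat_mul [Fintype L] (x : Matrix I I ℂ) (F : Matrix K L (EntryPoly I))
    (G : Matrix L M (EntryPoly I)) : evalMat x (F * G) = evalMat x F * evalMat x G :=
  Matrix.map_mul

lemma evalMat_sub (x : Matrix I I ℂ) (F G : Matrix K L (EntryPoly I)) :
    evalMat x (F - G) = evalMat x F - evalMat x G :=
  Matrix.map_sub _ (map_sub _) _ _

lemma evalMat_add (x : Matrix I I ℂ) (F G : Matrix K L (EntryPoly I)) :
    evalMat x (F + G) = evalMat x F + evalMat x G :=
  Matrix.map_add _ (map_add _) _ _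

lemma evalMat_one [DecidableEq K] (x : Matrix I I ℂ) :
    evalMat x (1 : Matrix K K (EntryPoly I)) = 1 :=
  Matrix.map_one _ (map_zero _) (map_one _)

lemma evalMat_smul (x : Matrix I I ℂ) (p : EntryPoly I) (F : Matrix K L (EntryPoly I)) :
    evalMat x (p • F) = evalAt x p • evalMat x F := by
  ext
  simp [evalMat]

lemma evalMat_genMat (x : Matrix I I ℂ) : evalMat x (genMat I) = x := by
  ext
  simp [evalMat, evalAt_X]

lemma evalAt_trace [Fintype K] (x : Matrix I I ℂ) (c : Matrix K K (EntryPoly I)) :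
    evalAt x c.trace = (evalMat x c).trace := by
  simp [Matrix.trace, evalMat]

lemma evalAt_normTr [Fintype I] (x : Matrix I I ℂ) (c : Matrix I I (EntryPoly I)) :
    evalAt x (normTr c) = ntr (evalMat x c) := by
  rw [normTr, map_smul, evalAt_trace, ntr, smul_eq_mul]

lemma evalMat_centred [Fintype I] [DecidableEq I] (x : Matrix I I ℂ)
    (c : Matrix I I (EntryPoly I)) :
    evalMat x (centred c) = evalMat x c - ntr (evalMat x c) • 1 := by
  rw [centred, evalMat_sub, evalMat_smul, evalMat_one, evalAt_normTr]

end EvalMat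

section Norms

variable {J : Type*} [Fintype J] [DecidableEq J]

lemma norm_ntr_le (y : Matrix J J ℂ) : ‖ntr y‖ ≤ ‖y‖ := by
  have htr : ‖y.trace‖ ≤ Fintype.card J * ‖y‖ :=
    (norm_sum_le _ _).trans <|
      (Finset.sum_le_sum fun i _ => norm_entry_le_l2_opNorm y i i).trans (by simp)
  rw [ntr, norm_mul, norm_inv, Complex.norm_natCast]
  exact inv_mul_le_of_le_mul₀ (Nat.cast_nonneg _) (norm_nonneg _) htr

lemma norm_sub_ntr_le [Nonempty J] (y : Matrix J J ℂ) : ‖y - ntr y • 1‖ ≤ 2 * ‖y‖ := by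
  refine (norm_sub_le _ _).trans ?_
  rw [norm_smul, CStarRing.norm_one]
  linarith [norm_ntr_le y]

lemma sum_norm_vecMul_le (y : Matrix J J ℂ) (v : J → ℂ) :
    ∑ i, ‖∑ k, y k i * v k‖ ^ 2 ≤ ‖y‖ ^ 2 * ∑ k, ‖v k‖ ^ 2 := by
  have hop := pow_le_pow_left₀ (norm_nonneg _)
    (Matrix.l2_opNorm_mulVec yᴴ (WithLp.toLp 2 (star v))) 2
  rw [mul_pow, EuclideanSpace.norm_sq_eq, EuclideanSpace.norm_sq_eq,
    Matrix.l2_opNorm_conjTranspose] at hop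
  have hstar (i : J) : ‖∑ k, y k i * v k‖ = ‖(yᴴ *ᵥ star v) i‖ := by
    rw [← norm_star, star_sum]
    simp [Matrix.mulVec, dotProduct]
  simpa [hstar] using hop

end Norms

/-- The mean square of a polynomial in the entries of a random matrix. -/
def meanSq {I : Type*} (ν : Measure (Matrix I I ℂ)) (p : EntryPoly I) : ℝ :=
  ∫ x, ‖evalAt x p‖ ^ 2 ∂ν

/-- The Dirichlet energy of an array with respect to a family of derivations. -/
def energy {I J R : Type*} [Fintype J] [Fintype R] (ν : Measure (Matrix I I ℂ))
    (D : J → J → Derivation ℂ (EntryPoly I) (EntryPoly I)) (F : Matrix J R (EntryPoly I)) : ℝ :=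
  ∑ s, ∑ l, ∑ i, ∑ j, meanSq ν (D i j (F l s))

/-- `c` is almost surely bounded by `C` as an operator on row vectors. -/
def BoundedBy {I J : Type*} [Fintype J] (ν : Measure (Matrix I I ℂ))
    (c : Matrix J J (EntryPoly I)) (C : ℝ) : Prop :=
  ∀ᵐ x ∂ν, ∀ v : J → ℂ,
    ∑ i, ‖∑ k, evalAt x (c k i) * v k‖ ^ 2 ≤ C ^ 2 * ∑ k, ‖v k‖ ^ 2

lemma meanSq_nonneg {I : Type*} (ν : Measure (Matrix I I ℂ)) (p : EntryPoly I) :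
    0 ≤ meanSq ν p :=
  integral_nonneg fun _ => by positivity

section BoundedBy

variable {I J : Type*} [Fintype J] [DecidableEq J] {ν : Measure (Matrix I I ℂ)}

lemma boundedBy_one : BoundedBy ν (1 : Matrix J J (EntryPoly I)) 1 := by
  refine Eventually.of_forall fun x v => le_of_eq ?_
  simp [Matrix.one_apply, apply_ite (evalAt x)]

lemma boundedBy_of_norm_evalMat_le {c : Matrix J J (EntryPoly I)} {C : ℝ}
    (hC : ∀ᵐ x ∂ν, ‖evalMat x c‖ ≤ C) : BoundedBy ν c C := by
  filter_upwards [hC] with x hx v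
  exact (sum_norm_vecMul_le (evalMat x c) v).trans (by gcongr)

end BoundedBy

namespace InvMeasure

variable {I J R : Type*} [Fintype I] [DecidableEq I] [Fintype J]
variable {ν : Measure (Matrix I I ℂ)} [IsFiniteMeasure ν] {r : ℝ}

lemma expect_re_nonneg (h : InvMeasure ν r) {p : EntryPoly I}
    (hp : ∀ᵐ x ∂ν, 0 ≤ (evalAt x p).re) : 0 ≤ (h.expect p).re :=
  (integral_nonneg_of_ae hp).trans_eq (integral_re (h.integrable p))

lemma integrable_norm_sq (h : InvMeasure ν r) (p : EntryPoly I) :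
    Integrable (fun x => ‖evalAt x p‖ ^ 2) ν := by
  refine (h.integrable (conjPoly I p * p)).norm.congr (h.herm.mono fun x hx => ?_)
  simp [evalAt_conjPoly hx, sq]

lemma norm_expect_conj_mul_le (h : InvMeasure ν r) (p q : EntryPoly I) :
    ‖h.expect (conjPoly I p * q)‖ ≤ (meanSq ν p + meanSq ν q) / 2 := by
  have hint := (h.integrable_norm_sq p).add (h.integrable_norm_sq q)
  rw [meanSq, meanSq, ← integral_add (h.integrable_norm_sq p) (h.integrable_norm_sq q),
    ← integral_div]
  refine norm_integral_le_of_norm_le (hint.div_const 2) (h.herm.mono fun x hx => ?_)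
  rw [map_mul, norm_mul, evalAt_conjPoly hx, norm_star]
  linarith [two_mul_le_add_sq ‖evalAt x p‖ ‖evalAt x q‖]

lemma sum_meanSq_mul_le (h : InvMeasure ν r) {c : Matrix J J (EntryPoly I)} {C : ℝ}
    (hc : BoundedBy ν c C) (p : J → EntryPoly I) :
    ∑ i, meanSq ν (∑ k, c k i * p k) ≤ C ^ 2 * ∑ k, meanSq ν (p k) := by
  simp only [meanSq]
  rw [← integral_finsetSum _ fun i _ => h.integrable_norm_sq _,
    ← integral_finsetSum _ fun i _ => h.integrable_norm_sq _, ← integral_const_mul]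
  refine integral_mono_ae (integrable_finsetSum _ fun i _ => h.integrable_norm_sq _)
    ((integrable_finsetSum _ fun i _ => h.integrable_norm_sq _).const_mul _)
    (hc.mono fun x hx => ?_)
  simpa using hx fun k => evalAt x (p k)

lemma norm_sum_expect_conj_mul_le (h : InvMeasure ν r) {c : Matrix J J (EntryPoly I)} {C : ℝ}
    (hc : BoundedBy ν c C) (p q : J → EntryPoly I) :
    ‖∑ i, ∑ k, h.expect (conjPoly I (c k i * p k) * q i)‖ ≤
      C ^ 2 / 2 * ∑ k, meanSq ν (p k) + 1 / 2 * ∑ i, meanSq ν (q i) := by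
  have hinner (i : J) : ∑ k, h.expect (conjPoly I (c k i * p k) * q i) =
      h.expect (conjPoly I (∑ k, c k i * p k) * q i) := by
    simp only [map_sum, Finset.sum_mul]
  calc _ ≤ ∑ i, (meanSq ν (∑ k, c k i * p k) + meanSq ν (q i)) / 2 :=
        norm_sum_le_of_le _ fun i _ => (hinner i).symm ▸ h.norm_expect_conj_mul_le _ _
    _ ≤ _ := by
        rw [← Finset.sum_div, Finset.sum_add_distrib]
        linarith [h.sum_meanSq_mul_le hc p]

lemma norm_resid_le [Fintype R] (h : InvMeasure ν r)
    (D : J → J → Derivation ℂ (EntryPoly I) (EntryPoly I)) {c : Matrix J J (EntryPoly I)} {C : ℝ}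
    (hc : BoundedBy ν c C) (F : Matrix J R (EntryPoly I)) :
    ‖resid (conjPoly I) h.expect D c F F‖ ≤ (C ^ 2 + 1) / 2 * energy ν D F := by
  have hleft : ∑ s, ∑ j, ∑ l, ∑ k, meanSq ν (D k l (F j s)) = energy ν D F :=
    Finset.sum_congr rfl fun s _ => Finset.sum_congr rfl fun l _ => Finset.sum_comm
  have hright : ∑ s, ∑ j, ∑ l, ∑ i, meanSq ν (D i j (F l s)) = energy ν D F := by
    refine Finset.sum_congr rfl fun s _ => ?_
    rw [Finset.sum_comm]
    exact Finset.sum_congr rfl fun l _ => Finset.sum_comm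
  calc _ ≤ ∑ s, ∑ j, ∑ l, (C ^ 2 / 2 * ∑ k, meanSq ν (D k l (F j s)) +
        1 / 2 * ∑ i, meanSq ν (D i j (F l s))) :=
        norm_sum_le_of_le _ fun s _ => norm_sum_le_of_le _ fun j _ => norm_sum_le_of_le _ fun l _ =>
          h.norm_sum_expect_conj_mul_le hc (fun k => D k l (F j s)) fun i => D i j (F l s)
    _ = (C ^ 2 + 1) / 2 * energy ν D F := by
        simp only [Finset.sum_add_distrib, ← Finset.mul_sum, hleft, hright]
        ring

end InvMeasure

end Estimates

section HilbertSchmidtInner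

variable {J R : Type*} [Fintype J] [Fintype R]

/-- The real part of the Hilbert-Schmidt inner product. -/
def hsInner (g f : Matrix J R ℂ) : ℝ := (gᴴ * f).trace.re

lemma hsInner_comm (g f : Matrix J R ℂ) : hsInner g f = hsInner f g := by
  rw [hsInner, ← Complex.conj_re, ← Complex.star_def, ← Matrix.trace_conjTranspose,
    Matrix.conjTranspose_mul, Matrix.conjTranspose_conjTranspose, hsInner]

lemma hsInner_add_left (g g' f : Matrix J R ℂ) :
    hsInner (g + g') f = hsInner g f + hsInner g' f := by
  simp [hsInner, Matrix.add_mul]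

lemma hsInner_add_right (g f f' : Matrix J R ℂ) :
    hsInner g (f + f') = hsInner g f + hsInner g f' := by
  simp [hsInner, Matrix.mul_add]

lemma hsInner_ofReal_smul_right (t : ℝ) (g f : Matrix J R ℂ) :
    hsInner g ((t : ℂ) • f) = t * hsInner g f := by
  simp [hsInner]

lemma hsInner_self_nonneg (g : Matrix J R ℂ) : 0 ≤ hsInner g g :=
  (Complex.le_def.1 (Matrix.posSemidef_conjTranspose_mul_self g).trace_nonneg).1

lemma hsInner_mul_left {y : Matrix J J ℂ} (hy : y.IsHermitian)
    (g f : Matrix J R ℂ) : hsInner (y * g) f = hsInner g (y * f) := by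
  rw [hsInner, Matrix.conjTranspose_mul, hy.eq, Matrix.mul_assoc, hsInner]

lemma neg_le_two_mul_hsInner {t : ℝ} (ht : 0 < t) (g f : Matrix J R ℂ) :
    -(t * hsInner f f + t⁻¹ * hsInner g g) ≤ 2 * hsInner g f := by
  have hexpand : hsInner (g + (t : ℂ) • f) (g + (t : ℂ) • f) =
      hsInner g g + 2 * t * hsInner g f + t ^ 2 * hsInner f f := by
    rw [hsInner_add_right, hsInner_ofReal_smul_right, hsInner_comm _ g, hsInner_comm _ f,
      hsInner_add_right, hsInner_add_right, hsInner_ofReal_smul_right, hsInner_ofReal_smul_right,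
      hsInner_comm f g]
    ring
  have hnonneg := mul_nonneg (inv_nonneg.2 ht.le) (hexpand ▸ hsInner_self_nonneg (g + (t : ℂ) • f))
  have hcancel : t⁻¹ * (hsInner g g + 2 * t * hsInner g f + t ^ 2 * hsInner f f) =
      t⁻¹ * hsInner g g + 2 * hsInner g f + t * hsInner f f := by
    field_simp
  linarith

variable [DecidableEq J]

lemma le_hsInner_add_mul_add {y : Matrix J J ℂ} (hy : y.IsHermitian) {a t : ℝ}
    (ha : (y + (a : ℂ) • 1).PosSemidef) (ht : 0 < t) (φ ψ : Matrix J R ℂ) :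
    hsInner φ (y * φ) - (a + t) * hsInner ψ ψ - t⁻¹ * hsInner φ (y * y * φ) ≤
      hsInner (φ + ψ) (y * (φ + ψ)) := by
  have hyoung := neg_le_two_mul_hsInner ht (y * φ) ψ
  have hψ : 0 ≤ hsInner ψ ((y + (a : ℂ) • 1) * ψ) := by
    rw [hsInner, ← Matrix.mul_assoc]
    exact (Complex.le_def.1 (ha.conjTranspose_mul_mul_same ψ).trace_nonneg).1
  rw [Matrix.add_mul, Matrix.smul_mul, Matrix.one_mul, hsInner_add_right,
    hsInner_ofReal_smul_right] at hψ
  rw [hsInner_mul_left hy, hsInner_mul_left hy, ← Matrix.mul_assoc] at hyoung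
  rw [Matrix.mul_add, hsInner_add_left, hsInner_add_right, hsInner_add_right,
    ← hsInner_mul_left hy ψ φ, hsInner_comm (y * ψ) φ]
  linarith

end HilbertSchmidtInner

section Quadratic

open scoped Matrix.Norms.L2Operator

section SpectralBounds

variable {I : Type*} [Fintype I]

lemma ofReal_re_ntr {x : Matrix I I ℂ} (hx : x.IsHermitian) :
    ((ntr x).re : ℂ) = ntr x := by
  have htr : star x.trace = x.trace := by rw [← Matrix.trace_conjTranspose, hx.eq]
  refine Complex.conj_eq_iff_re.1 ?_
  simpa [ntr] using Or.inl htr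

variable [DecidableEq I]

/-- Hermitian matrices of norm at most `r` and spectrum bounded below by `a`, whose normalized
trace lies in `[m₁, m₂]` and whose spectral variance is at most `s`. -/
structure SpectralBounds (a r m₁ m₂ s : ℝ) (x : Matrix I I ℂ) : Prop where
  herm : x.IsHermitian
  bdd : ‖x‖ ≤ r
  low : (x - (a : ℂ) • 1).PosSemidef
  mean_ge : m₁ ≤ (ntr x).re
  mean_le : (ntr x).re ≤ m₂
  var_le : (ntr ((x - ntr x • 1) * (x - ntr x • 1))).re ≤ s

lemma isHermitian_sub_ntr {x : Matrix I I ℂ} (hx : x.IsHermitian) :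
    (x - ntr x • 1).IsHermitian := by
  rw [← ofReal_re_ntr hx]
  exact hx.sub (by simp [Matrix.IsHermitian, Matrix.conjTranspose_smul])

lemma SpectralBounds.posSemidef_sub_ntr_add {a r m₁ m₂ s : ℝ} {x : Matrix I I ℂ}
    (hx : SpectralBounds a r m₁ m₂ s x) :
    ((x - ntr x • 1) + ((m₂ - a : ℝ) : ℂ) • 1).PosSemidef := by
  have hsplit : (x - ntr x • 1) + ((m₂ - a : ℝ) : ℂ) • (1 : Matrix I I ℂ) =
      (x - (a : ℂ) • 1) + ((m₂ - (ntr x).re : ℝ) : ℂ) • 1 := by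
    rw [← ofReal_re_ntr hx.herm]
    simp only [Complex.ofReal_sub, sub_smul, Complex.ofReal_re]
    abel
  rw [hsplit]
  refine hx.low.add (Matrix.PosSemidef.one.smul ?_)
  rw [Complex.zero_le_real]
  linarith [hx.mean_le]

lemma SpectralBounds.le_hsInner_mul {R : Type*} [Fintype R] {a r m₁ m₂ s t : ℝ}
    {x y z : Matrix I I ℂ} (hx : SpectralBounds a r m₁ m₂ s x) (hy : y = x - ntr x • 1)
    (hz : z = y * y - ntr (y * y) • 1) (ht : 0 < t) (φ ψ : Matrix I R ℂ) :
    m₁ * hsInner (φ + ψ) (φ + ψ) + hsInner φ (y * φ) - (m₂ - a + t) * hsInner ψ ψ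
      - t⁻¹ * (s * hsInner φ φ + hsInner φ (z * φ)) ≤ hsInner (φ + ψ) (x * (φ + ψ)) := by
  have hyherm : y.IsHermitian := hy ▸ isHermitian_sub_ntr hx.herm
  have hyy : (y * y).IsHermitian := by
    rw [Matrix.IsHermitian, Matrix.conjTranspose_mul, hyherm.eq]
  have hvar : (ntr (y * y)).re ≤ s := hy ▸ hx.var_le
  have key := le_hsInner_add_mul_add hyherm (hy ▸ hx.posSemidef_sub_ntr_add) ht φ ψ
  have hxsplit : x = y + ((ntr x).re : ℂ) • 1 := by rw [ofReal_re_ntr hx.herm, hy, sub_add_cancel]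
  have hzsplit : y * y = z + ((ntr (y * y)).re : ℂ) • 1 := by
    rw [ofReal_re_ntr hyy, hz, sub_add_cancel]
  have hFx : hsInner (φ + ψ) (x * (φ + ψ)) =
      hsInner (φ + ψ) (y * (φ + ψ)) + (ntr x).re * hsInner (φ + ψ) (φ + ψ) := by
    conv_lhs => rw [hxsplit, Matrix.add_mul, hsInner_add_right, Matrix.smul_mul, Matrix.one_mul,
      hsInner_ofReal_smul_right]
  have hφyy : hsInner φ (y * y * φ) =
      hsInner φ (z * φ) + (ntr (y * y)).re * hsInner φ φ := by
    conv_lhs => rw [hzsplit, Matrix.add_mul, hsInner_add_right, Matrix.smul_mul, Matrix.one_mul,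
      hsInner_ofReal_smul_right]
  have hmean := mul_le_mul_of_nonneg_right hx.mean_ge (hsInner_self_nonneg (φ + ψ))
  have hvar' := mul_le_mul_of_nonneg_left
    (mul_le_mul_of_nonneg_right hvar (hsInner_self_nonneg φ)) (inv_nonneg.2 ht.le)
  rw [hφyy, mul_add] at key
  rw [hFx, mul_add]
  linarith

end SpectralBounds

/-- The polynomial in the entries of a matrix given by the inner product of two arrays. -/
def dotPoly {I J R : Type*} [Fintype J] [Fintype R] (G F : Matrix J R (EntryPoly I)) :
    EntryPoly I :=
  ∑ s, ∑ j, conjPoly I (G j s) * F j s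

lemma re_evalAt_dotPoly {I J R : Type*} [Fintype J] [Fintype R] {x : Matrix I I ℂ}
    (hx : x.IsHermitian) (G F : Matrix J R (EntryPoly I)) :
    (evalAt x (dotPoly G F)).re = hsInner (evalMat x G) (evalMat x F) := by
  simp [dotPoly, hsInner, Matrix.trace, Matrix.mul_apply, evalMat, evalAt_conjPoly hx]

namespace InvMeasure

variable {I R : Type*} [Fintype I] [DecidableEq I] [Fintype R]
variable {ν : Measure (Matrix I I ℂ)} [IsFiniteMeasure ν] {r : ℝ}

/-- The expected real Hilbert-Schmidt inner product of two arrays of polynomials. -/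
def form {J : Type*} [Fintype J] (h : InvMeasure ν r) (G F : Matrix J R (EntryPoly I)) : ℝ :=
  (pairing (conjPoly I) h.expect G F).re

lemma form_eq {J : Type*} [Fintype J] (h : InvMeasure ν r) (G F : Matrix J R (EntryPoly I)) :
    h.form G F = (h.expect (dotPoly G F)).re := by
  simp [form, pairing, dotPoly]

lemma form_self_nonneg {J : Type*} [Fintype J] (h : InvMeasure ν r)
    (F : Matrix J R (EntryPoly I)) : 0 ≤ h.form F F := by
  rw [form_eq]
  refine h.expect_re_nonneg (h.herm.mono fun x hx => ?_)
  rw [re_evalAt_dotPoly hx]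
  exact hsInner_self_nonneg _

lemma le_form_mul (h : InvMeasure ν r) {a m₁ m₂ s t : ℝ}
    (hν : ∀ᵐ x ∂ν, SpectralBounds a r m₁ m₂ s x) (ht : 0 < t) {Y Z : Matrix I I (EntryPoly I)}
    (hY : Y = centred (genMat I)) (hZ : Z = centred (Y * Y)) (Φ Ψ : Matrix I R (EntryPoly I)) :
    m₁ * h.form (Φ + Ψ) (Φ + Ψ) + h.form Φ (Y * Φ) - (m₂ - a + t) * h.form Ψ Ψ
      - t⁻¹ * (s * h.form Φ Φ + h.form Φ (Z * Φ)) ≤ h.form (Φ + Ψ) (genMat I * (Φ + Ψ)) := by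
  have key : 0 ≤ (h.expect (dotPoly (Φ + Ψ) (genMat I * (Φ + Ψ)) -
      ((m₁ : ℂ) • dotPoly (Φ + Ψ) (Φ + Ψ) + dotPoly Φ (Y * Φ)
        - ((m₂ - a + t : ℝ) : ℂ) • dotPoly Ψ Ψ
        - ((t⁻¹ : ℝ) : ℂ) • ((s : ℂ) • dotPoly Φ Φ + dotPoly Φ (Z * Φ))))).re := by
    refine h.expect_re_nonneg (hν.mono fun x hx => ?_)
    have hyx : evalMat x Y = x - ntr x • 1 := by rw [hY, evalMat_centred, evalMat_genMat]
    have hzx : evalMat x Z = evalMat x Y * evalMat x Y - ntr (evalMat x Y * evalMat x Y) • 1 := by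
      rw [hZ, evalMat_centred, evalMat_mul]
    have hpointwise := hx.le_hsInner_mul hyx hzx ht (evalMat x Φ) (evalMat x Ψ)
    simp only [map_sub, map_add, map_smul, smul_eq_mul, Complex.sub_re, Complex.add_re,
      Complex.re_ofReal_mul, re_evalAt_dotPoly hx.herm, evalMat_mul, evalMat_add,
      evalMat_genMat] at hpointwise ⊢
    linarith
  simp only [form_eq]
  simp only [map_sub, map_add, map_smul, smul_eq_mul, Complex.sub_re, Complex.add_re,
    Complex.re_ofReal_mul] at key
  linarith

lemma abs_form_sub_avgDiv_mul_le [Nonempty I] (h : InvMeasure ν r) {c : Matrix I I (EntryPoly I)}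
    (hc : Spectral c) (htr : c.trace = 0) {C : ℝ} (hC : ∀ᵐ x ∂ν, ‖evalMat x c‖ ≤ C)
    (F : Matrix I R (EntryPoly I)) :
    |h.form (F - avgDiv unitDer F) (c * (F - avgDiv unitDer F))| ≤
      (C ^ 2 + 1) / 2 * (((Fintype.card I : ℝ) ^ 2)⁻¹ * energy ν unitDer F) := by
  refine (Complex.abs_re_le_norm _).trans ?_
  rw [hc.equivariant.pairing_sub_avgDiv_mul h.glAction htr, norm_mul, mul_left_comm]
  simp only [norm_pow, norm_inv, Complex.norm_natCast, inv_pow]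
  gcongr
  exact h.norm_resid_le _ (boundedBy_of_norm_evalMat_le hC) F

lemma abs_form_avgDiv_sub_le {J : Type*} [Fintype J] [DecidableEq J] [Nonempty J]
    (h : InvMeasure ν r) {D : J → J → Derivation ℂ (EntryPoly I) (EntryPoly I)}
    (hD : GLAction (conjPoly I) h.expect D) (F : Matrix J R (EntryPoly I)) :
    |h.form (avgDiv D F) (avgDiv D F) - h.form F (avgDiv D F)| ≤
      ((Fintype.card J : ℝ) ^ 2)⁻¹ * energy ν D F := by
  rw [form, form, ← Complex.sub_re, hD.pairing_avgDiv_self, add_sub_cancel_left]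
  refine (Complex.abs_re_le_norm _).trans ?_
  rw [norm_mul]
  simp only [norm_pow, norm_inv, Complex.norm_natCast, inv_pow]
  gcongr
  exact (h.norm_resid_le D boundedBy_one F).trans_eq (by ring)

lemma form_sub_avgDiv_self {J : Type*} [Fintype J] [DecidableEq J] (h : InvMeasure ν r)
    {D : J → J → Derivation ℂ (EntryPoly I) (EntryPoly I)}
    (hD : GLAction (conjPoly I) h.expect D) (F : Matrix J R (EntryPoly I)) :
    h.form (F - avgDiv D F) (F - avgDiv D F) =
      h.form F F - 2 * h.form F (avgDiv D F) + h.form (avgDiv D F) (avgDiv D F) := by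
  simp only [form, pairing_sub_left, pairing_sub_right, hD.pairing_avgDiv_left F F, Complex.sub_re]
  ring

end InvMeasure

lemma norm_evalMat_centred_genMat_le {I : Type*} [Fintype I] [DecidableEq I] [Nonempty I] {r : ℝ}
    {x : Matrix I I ℂ} (hx : ‖x‖ ≤ r) : ‖evalMat x (centred (genMat I))‖ ≤ 2 * r := by
  rw [evalMat_centred, evalMat_genMat]
  exact (norm_sub_ntr_le x).trans (by linarith)

lemma norm_evalMat_centred_mul_self_le {I : Type*} [Fintype I] [DecidableEq I] [Nonempty I]
    {r : ℝ} {x : Matrix I I ℂ} {c : Matrix I I (EntryPoly I)} (hc : ‖evalMat x c‖ ≤ r) :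
    ‖evalMat x (centred (c * c))‖ ≤ 2 * r ^ 2 := by
  rw [evalMat_centred, evalMat_mul]
  refine (norm_sub_ntr_le _).trans ?_
  have hmul := norm_mul_le (evalMat x c) (evalMat x c)
  have hsq := mul_le_mul hc hc (norm_nonneg _) ((norm_nonneg _).trans hc)
  linarith [sq r]

/-- The constant in front of the error term of `InvMeasure.le_form_genMat_mul`. -/
def errConst (r a s t : ℝ) : ℝ :=
  ((2 * r) ^ 2 + 1) / 2 + (a + t) + t⁻¹ * s + t⁻¹ * (((8 * r ^ 2) ^ 2 + 1) / 2)

-- Apply `le_form_mul` to the splitting of `F` into `F - avgDiv unitDer F` and `avgDiv unitDer F`.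
lemma InvMeasure.le_form_genMat_mul {I R : Type*} [Fintype I] [DecidableEq I] [Fintype R]
    [Nonempty I] {ν : Measure (Matrix I I ℂ)} [IsFiniteMeasure ν] {r : ℝ} (h : InvMeasure ν r)
    {a m₁ m₂ s t : ℝ} (hν : ∀ᵐ x ∂ν, SpectralBounds a r m₁ m₂ s x) (ht : 0 < t) (hs : 0 ≤ s)
    (ha : a ≤ m₂) (F : Matrix I R (EntryPoly I)) :
    (m₁ - t⁻¹ * s) * h.form F F - (m₂ - a + t - t⁻¹ * s) * h.form F (avgDiv unitDer F)
      - errConst r (m₂ - a) s t * (((Fintype.card I : ℝ) ^ 2)⁻¹ * energy ν unitDer F)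
      ≤ h.form F (genMat I * F) := by
  set e := ((Fintype.card I : ℝ) ^ 2)⁻¹ * energy ν unitDer F with he
  have hY : ∀ᵐ x ∂ν, ‖evalMat x (centred (genMat I))‖ ≤ 2 * r :=
    h.bdd.mono fun x hx => norm_evalMat_centred_genMat_le hx
  have hZ : ∀ᵐ x ∂ν,
      ‖evalMat x (centred (centred (genMat I) * centred (genMat I)))‖ ≤ 8 * r ^ 2 :=
    hY.mono fun x hx => (norm_evalMat_centred_mul_self_le hx).trans_eq (by ring)
  have hlower := h.le_form_mul hν ht rfl rfl (F - avgDiv unitDer F) (avgDiv unitDer F)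
  have hYerr := h.abs_form_sub_avgDiv_mul_le spectral_genMat.centred (trace_centred _) hY F
  have hZerr := h.abs_form_sub_avgDiv_mul_le spectral_genMat.centred.sq.centred
    (trace_centred _) hZ F
  have hΨerr := h.abs_form_avgDiv_sub_le h.glAction F
  rw [sub_add_cancel, h.form_sub_avgDiv_self h.glAction] at hlower
  rw [← he, abs_le] at hYerr hZerr hΨerr
  have hΨ := mul_le_mul_of_nonneg_left hΨerr.2 (by linarith : 0 ≤ m₂ - a + t)
  have hZ' := mul_le_mul_of_nonneg_left hZerr.2 (inv_nonneg.2 ht.le)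
  have hΨ' := mul_le_mul_of_nonneg_left hΨerr.2 (mul_nonneg (inv_nonneg.2 ht.le) hs)
  rw [errConst]
  linarith [hYerr.1]

end Quadratic

section Bipartite

variable {ι J R 𝔓 : Type*}

/-- The linear map `X ↦ n (1 ⊗ Tr₁ X) - X` on matrices over a tensor product, where `n` is the
dimension of the first factor. -/
def reduction [Fintype ι] [DecidableEq ι] [Ring 𝔓] (c : Matrix (ι × J) (ι × J) 𝔓) :
    Matrix (ι × J) (ι × J) 𝔓 :=
  Matrix.of fun p q => Fintype.card ι * (if p.1 = q.1 then ∑ α, c (α, p.2) (α, q.2) else 0) - c p q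

/-- The array with column blocks `n E_{γβ} F - δ_{βγ} F`, where the matrix units `E_{γβ}` act on the
first tensor factor; it turns `reduction` into a sandwiched product. -/
def spread [Fintype ι] [DecidableEq ι] [AddCommGroup 𝔓] (F : Matrix (ι × J) R 𝔓) :
    Matrix (ι × J) (R × ι × ι) 𝔓 :=
  Matrix.of fun p s => (if p.1 = s.2.2 then Fintype.card ι • F (s.2.1, p.2) s.1 else 0) -
    (if s.2.1 = s.2.2 then F p s.1 else 0)

/-- Rearrangement of an array, treating the first tensor factor as a column index. -/
def regroup (F : Matrix (ι × J) R 𝔓) : Matrix J (R × ι) 𝔓 :=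
  Matrix.of fun a s => F (s.2, a) s.1

/-- The action of a matrix of operators on an array. -/
def opMul {I : Type*} [Fintype J] [AddCommGroup 𝔓] [Module ℂ 𝔓]
    (T : Matrix I J (Module.End ℂ 𝔓)) (F : Matrix J R 𝔓) : Matrix I R 𝔓 :=
  Matrix.of fun i r => ∑ j, T i j (F j r)

section OpMul

lemma reduction_map [Fintype ι] [DecidableEq ι] {F 𝔔 𝔎 : Type*} [Ring 𝔔] [Ring 𝔎] [FunLike F 𝔔 𝔎]
    [AddMonoidHomClass F 𝔔 𝔎] (f : F) (c : Matrix (ι × J) (ι × J) 𝔔) :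
    reduction (c.map f) = (reduction c).map f := by
  ext p q
  simp [reduction, apply_ite f, ← nsmul_eq_mul]

variable [Fintype J] [CommRing 𝔓] [Algebra ℂ 𝔓]

lemma opMul_map_lmul (c : Matrix J J 𝔓) (F : Matrix J R 𝔓) :
    opMul (c.map (Algebra.lmul ℂ 𝔓)) F = c * F := by
  ext j r
  simp [opMul, Matrix.mul_apply]

lemma opMul_derivation (D : J → J → Derivation ℂ 𝔓 𝔓) (F : Matrix J R 𝔓) :
    opMul (Matrix.of fun j i => (D i j : Module.End ℂ 𝔓)) F = divOp D F := by
  ext j r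
  simp [opMul, divOp]

variable [Fintype ι] [DecidableEq ι]

lemma opMul_reduction_apply (T : Matrix (ι × J) (ι × J) (Module.End ℂ 𝔓))
    (F : Matrix (ι × J) R 𝔓) (β : ι) (a : J) (s : R) :
    opMul (reduction T) F (β, a) s =
      Fintype.card ι * ∑ γ, ∑ b, T (γ, a) (γ, b) (F (β, b) s) - opMul T F (β, a) s := by
  simp only [opMul, reduction, Matrix.of_apply, LinearMap.sub_apply, Finset.sum_sub_distrib]
  congr 1
  rw [Fintype.sum_prod_type, Finset.sum_eq_single β (fun γ _ hγ => by simp [hγ.symm]) (by simp),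
    Finset.sum_comm, Finset.mul_sum]
  simp [LinearMap.sum_apply, Finset.mul_sum]

lemma opMul_spread_apply (T : Matrix (ι × J) (ι × J) (Module.End ℂ 𝔓)) (F : Matrix (ι × J) R 𝔓)
    (p : ι × J) (s : R) (β γ : ι) :
    opMul T (spread F) p (s, β, γ) =
      Fintype.card ι * ∑ b, T p (γ, b) (F (β, b) s) - if β = γ then opMul T F p s else 0 := by
  simp only [opMul, spread, Matrix.of_apply, map_sub, Finset.sum_sub_distrib]
  congr 1
  · rw [Fintype.sum_prod_type, Finset.sum_eq_single γ (fun δ _ hδ => by simp [hδ]) (by simp)]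
    simp [← nsmul_eq_mul, Finset.smul_sum]
  · split_ifs <;> simp

end OpMul

section Pairing

lemma pairing_regroup [Fintype ι] [Fintype J] [Fintype R] [CommRing 𝔓] [Algebra ℂ 𝔓]
    (κ : 𝔓 →+* 𝔓) (E : 𝔓 →ₗ[ℂ] ℂ) (G F : Matrix (ι × J) R 𝔓) :
    pairing κ E (regroup G) (regroup F) = pairing κ E G F := by
  simp only [pairing, regroup, Matrix.of_apply, Fintype.sum_prod_type]

variable [Fintype ι] [DecidableEq ι] [Fintype J] [Fintype R] [CommRing 𝔓] [Algebra ℂ 𝔓]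
variable {κ : 𝔓 →+* 𝔓} {E : 𝔓 →ₗ[ℂ] ℂ}

lemma pairing_spread_left (G : Matrix (ι × J) R 𝔓) (H : Matrix (ι × J) (R × ι × ι) 𝔓) :
    pairing κ E (spread G) H = pairing κ E G (Matrix.of fun p s =>
      Fintype.card ι * ∑ γ, H (γ, p.2) (s, p.1, γ) - ∑ β, H p (s, β, β)) := by
  have hcolumn (s : R) (β γ : ι) :
      ∑ p, E (κ (spread G p (s, β, γ)) * H p (s, β, γ)) =
        ∑ a, E (κ (G (β, a) s) * (Fintype.card ι * H (γ, a) (s, β, γ))) -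
          if β = γ then ∑ p, E (κ (G p s) * H p (s, β, γ)) else 0 := by
    simp only [spread, Matrix.of_apply, map_sub, sub_mul, Finset.sum_sub_distrib]
    congr 1
    · rw [Fintype.sum_prod_type, Finset.sum_eq_single γ (fun δ _ hδ => by simp [hδ]) (by simp)]
      refine Finset.sum_congr rfl fun a _ => ?_
      rw [if_pos rfl, map_nsmul, nsmul_eq_mul]
      congr 1
      ring
    · split_ifs <;> simp
  simp only [pairing, Fintype.sum_prod_type (α₁ := R), Fintype.sum_prod_type (α₁ := ι) (α₂ := ι),
    hcolumn, Finset.sum_sub_distrib, Finset.sum_ite_eq, Finset.mem_univ, if_true, Matrix.of_apply,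
    mul_sub, map_sub, Finset.mul_sum, map_sum]
  congr 1
  · refine Finset.sum_congr rfl fun s _ => ?_
    rw [Fintype.sum_prod_type]
    exact Finset.sum_congr rfl fun β _ => Finset.sum_comm
  · exact Finset.sum_congr rfl fun s _ => Finset.sum_comm

lemma pairing_spread_opMul (T : Matrix (ι × J) (ι × J) (Module.End ℂ 𝔓))
    (G F : Matrix (ι × J) R 𝔓) :
    pairing κ E (spread G) (opMul T (spread F)) =
      Fintype.card ι * pairing κ E G (opMul (reduction T) F) := by
  rw [pairing_spread_left, ← pairing_smul_right]
  congr 1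
  ext ⟨β, a⟩ s
  have hrow : ∑ γ, ∑ b, T (β, a) (γ, b) (F (γ, b) s) = opMul T F (β, a) s := by
    simp [opMul, Fintype.sum_prod_type]
  simp only [opMul_spread_apply, Matrix.of_apply, Matrix.smul_apply, opMul_reduction_apply,
    Finset.sum_sub_distrib, Finset.sum_ite_eq, Finset.mem_univ, if_true, ← Finset.mul_sum,
    Finset.sum_const, Finset.card_univ, Algebra.smul_def, map_natCast, eq_natCast, hrow]
  ring

lemma pairing_spread_spread (G F : Matrix (ι × J) R 𝔓) :
    pairing κ E (spread G) (spread F) =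
      Fintype.card ι * ((Fintype.card ι : ℂ) ^ 2 - 1) * pairing κ E G F := by
  rw [pairing_spread_left, ← pairing_smul_right]
  congr 1
  ext ⟨β, a⟩ s
  simp only [spread, Matrix.of_apply, Finset.sum_sub_distrib, Finset.sum_ite_eq, Finset.mem_univ,
    if_true, Finset.sum_const, Finset.card_univ, Matrix.smul_apply, Algebra.smul_def, map_mul,
    map_sub, map_pow, map_one, map_natCast, eq_natCast]
  ring

lemma pairing_spread_mul (c : Matrix (ι × J) (ι × J) 𝔓) (G F : Matrix (ι × J) R 𝔓) :
    pairing κ E (spread G) (c * spread F) =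
      Fintype.card ι * pairing κ E G (reduction c * F) := by
  rw [← opMul_map_lmul, pairing_spread_opMul, ← opMul_map_lmul (reduction c)]
  congr 3
  exact reduction_map (Algebra.lmul ℂ 𝔓).toRingHom c

end Pairing

section PartDer

variable [Fintype ι] [DecidableEq ι] [DecidableEq J]

/-- The derivations generated by the second tensor factor. -/
def partDer (ι : Type*) {J : Type*} [Fintype ι] [DecidableEq ι] [DecidableEq J] (a b : J) :
    Derivation ℂ (EntryPoly (ι × J)) (EntryPoly (ι × J)) :=
  ∑ α : ι, unitDer (α, a) (α, b)

lemma partDer_apply (a b : J) (p : EntryPoly (ι × J)) :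
    partDer ι a b p = ∑ α : ι, unitDer (α, a) (α, b) p :=
  derivation_sum_apply _ _ p

lemma partDer_comm (a b l k : J) (p : EntryPoly (ι × J)) :
    partDer ι a b (partDer ι l k p) = partDer ι l k (partDer ι a b p)
      - (if b = l then partDer ι a k p else 0) + (if a = k then partDer ι l b p else 0) := by
  have contract (P : Prop) [Decidable P] (β : ι) (q : ι → EntryPoly (ι × J)) :
      ∑ α, (if α = β ∧ P then q α else 0) = if P then q β else 0 := by
    rw [Finset.sum_eq_single β (fun α _ hα => by simp [hα]) (by simp)]
    simp
  simp only [partDer_apply, map_sum, unitDer_comm _ _ (_, l), Prod.mk.injEq,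
    Finset.sum_add_distrib, Finset.sum_sub_distrib, contract]
  rw [Finset.sum_comm]
  split_ifs <;> simp

lemma spread_map_unitDer (i j : ι × J) (F : Matrix (ι × J) R (EntryPoly (ι × J))) :
    (spread F).map (unitDer i j) = spread (F.map (unitDer i j)) := by
  ext p s
  simp only [spread, Matrix.of_apply, map_sub, apply_ite (unitDer i j), map_nsmul, map_zero,
    Matrix.map_apply]

lemma GLAction.partDer [Fintype J] {E : EntryPoly (ι × J) →ₗ[ℂ] ℂ}
    (h : GLAction (conjPoly (ι × J)) E unitDer) :
    GLAction (conjPoly (ι × J)) E (partDer ι (J := J)) where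
  adj a b p q := by
    simp only [partDer_apply, map_sum, Finset.sum_mul, Finset.mul_sum, h.adj]
  comm := partDer_comm
  trace p := by
    have htrace := sum_unitDer_self (I := ι × J) p
    rw [Fintype.sum_prod_type, Finset.sum_comm] at htrace
    simpa only [partDer_apply] using htrace
  conj_smul := conjPoly_smul

variable [Fintype J] [Fintype R] {E : EntryPoly (ι × J) →ₗ[ℂ] ℂ}

lemma pairing_opMul_reduction_unitDer (G F : Matrix (ι × J) R (EntryPoly (ι × J))) :
    pairing (conjPoly (ι × J)) E G (opMul (reduction (Matrix.of fun p q =>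
        (unitDer q p : Module.End ℂ (EntryPoly (ι × J))))) F) =
      Fintype.card ι * pairing (conjPoly (ι × J)) E (regroup G)
        (divOp (partDer ι) (regroup F)) -
      pairing (conjPoly (ι × J)) E G (divOp unitDer F) := by
  have hsum (β : ι) (a : J) (s : R) : ∑ γ, ∑ b, unitDer (γ, b) (γ, a) (F (β, b) s) =
      divOp (partDer ι) (regroup F) a (s, β) := by
    rw [Finset.sum_comm]
    simp only [divOp, regroup, Matrix.of_apply, partDer_apply]
  rw [← pairing_smul_right]
  simp only [pairing, Fintype.sum_prod_type, opMul_reduction_apply, opMul_derivation, hsum,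
    Matrix.of_apply, Derivation.coeFn_coe, mul_sub, map_sub, Finset.sum_sub_distrib, regroup,
    Matrix.smul_apply, Algebra.smul_def, map_natCast]

lemma pairing_spread_divOp (G F : Matrix (ι × J) R (EntryPoly (ι × J))) :
    pairing (conjPoly (ι × J)) E (spread G) (divOp unitDer (spread F)) =
      Fintype.card ι * (Fintype.card ι * pairing (conjPoly (ι × J)) E (regroup G)
        (divOp (partDer ι) (regroup F)) - pairing (conjPoly (ι × J)) E G (divOp unitDer F)) := by
  rw [← opMul_derivation, pairing_spread_opMul, pairing_opMul_reduction_unitDer]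

lemma pairing_spread_avgDiv [Nonempty ι] (G F : Matrix (ι × J) R (EntryPoly (ι × J))) :
    pairing (conjPoly (ι × J)) E (spread G) (avgDiv unitDer (spread F)) =
      Fintype.card ι * (pairing (conjPoly (ι × J)) E (regroup G)
        (avgDiv (partDer ι) (regroup F)) -
          pairing (conjPoly (ι × J)) E G (avgDiv unitDer F)) := by
  have hι : (Fintype.card ι : ℂ) ≠ 0 := by simp
  simp only [avgDiv, pairing_smul_right, pairing_spread_divOp, Fintype.card_prod, Nat.cast_mul]
  field_simp

end PartDer

namespace InvMeasure

section Energy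

variable {I K : Type*} [Fintype I] [DecidableEq I] [Fintype K]
variable {ν : Measure (Matrix I I ℂ)} [IsFiniteMeasure ν] {r : ℝ}

lemma re_expect_conj_mul_self (h : InvMeasure ν r) (p : EntryPoly I) :
    (h.expect (conjPoly I p * p)).re = meanSq ν p := by
  have hre := (integral_re (h.integrable (conjPoly I p * p))).symm
  refine hre.trans (integral_congr_ae (h.herm.mono fun x hx => ?_))
  simp [evalAt_conjPoly hx, ← Complex.normSq_eq_conj_mul_self, Complex.normSq_eq_norm_sq,
    -Complex.ofReal_pow]

lemma meanSq_sum_le (h : InvMeasure ν r) (p : K → EntryPoly I) :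
    meanSq ν (∑ k, p k) ≤ Fintype.card K * ∑ k, meanSq ν (p k) := by
  simp only [meanSq]
  rw [← integral_finsetSum _ fun k _ => h.integrable_norm_sq _, ← integral_const_mul]
  refine integral_mono (h.integrable_norm_sq _)
    ((integrable_finsetSum _ fun k _ => h.integrable_norm_sq _).const_mul _) fun x => ?_
  simp only [map_sum]
  calc _ ≤ (∑ k, ‖evalAt x (p k)‖) ^ 2 := by gcongr; exact norm_sum_le _ _
    _ ≤ _ := sq_sum_le_card_mul_sum_sq

lemma energy_eq_sum_form [Fintype R] (h : InvMeasure ν r) (F : Matrix I R (EntryPoly I)) :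
    energy ν unitDer F =
      ∑ i, ∑ j, h.form (F.map (unitDer i j)) (F.map (unitDer i j)) := by
  simp only [energy, form, pairing, Complex.re_sum, Matrix.map_apply, h.re_expect_conj_mul_self]
  rw [Finset.sum_congr rfl fun s _ => Finset.sum_comm, Finset.sum_comm]
  refine Finset.sum_congr rfl fun i _ => ?_
  rw [Finset.sum_congr rfl fun s _ => Finset.sum_comm, Finset.sum_comm]

end Energy

variable [Fintype ι] [DecidableEq ι] [Fintype J] [DecidableEq J] [Fintype R]
variable {ν : Measure (Matrix (ι × J) (ι × J) ℂ)} [IsFiniteMeasure ν] {r : ℝ}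

lemma form_spread_spread (h : InvMeasure ν r) (G F : Matrix (ι × J) R (EntryPoly (ι × J))) :
    h.form (spread G) (spread F) =
      Fintype.card ι * ((Fintype.card ι : ℝ) ^ 2 - 1) * h.form G F := by
  rw [form, pairing_spread_spread, form, ← Complex.re_ofReal_mul]
  push_cast
  rfl

lemma form_spread_mul (h : InvMeasure ν r)
    (c : Matrix (ι × J) (ι × J) (EntryPoly (ι × J))) (G F : Matrix (ι × J) R (EntryPoly (ι × J))) :
    h.form (spread G) (c * spread F) = Fintype.card ι * h.form G (reduction c * F) := by
  rw [form, pairing_spread_mul, form, ← Complex.re_ofReal_mul, Complex.ofReal_natCast]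

lemma form_spread_avgDiv [Nonempty ι] (h : InvMeasure ν r)
    (G F : Matrix (ι × J) R (EntryPoly (ι × J))) :
    h.form (spread G) (avgDiv unitDer (spread F)) = Fintype.card ι *
      (h.form (regroup G) (avgDiv (partDer ι) (regroup F)) - h.form G (avgDiv unitDer F)) := by
  rw [form, pairing_spread_avgDiv, form, form, ← Complex.sub_re, ← Complex.re_ofReal_mul,
    Complex.ofReal_natCast]

lemma energy_spread (h : InvMeasure ν r) (F : Matrix (ι × J) R (EntryPoly (ι × J))) :
    energy ν unitDer (spread F) =
      Fintype.card ι * ((Fintype.card ι : ℝ) ^ 2 - 1) * energy ν unitDer F := by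
  rw [h.energy_eq_sum_form, h.energy_eq_sum_form]
  simp only [spread_map_unitDer, form_spread_spread, Finset.mul_sum]

lemma energy_regroup_le (h : InvMeasure ν r) (F : Matrix (ι × J) R (EntryPoly (ι × J))) :
    energy ν (partDer ι) (regroup F) ≤ Fintype.card ι * energy ν unitDer F := by
  simp only [energy, Fintype.sum_prod_type, regroup, Matrix.of_apply, Finset.mul_sum]
  refine Finset.sum_le_sum fun s _ => Finset.sum_le_sum fun β _ => Finset.sum_le_sum fun l _ => ?_
  have hpart (a b : J) : meanSq ν (partDer ι a b (F (β, l) s)) ≤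
      ∑ α, Fintype.card ι * meanSq ν (unitDer (α, a) (α, b) (F (β, l) s)) := by
    rw [partDer_apply, ← Finset.mul_sum]
    exact h.meanSq_sum_le _
  refine (Finset.sum_le_sum fun a _ => Finset.sum_le_sum fun b _ => hpart a b).trans ?_
  rw [Finset.sum_congr rfl fun a _ => Finset.sum_comm, Finset.sum_comm]
  refine Finset.sum_le_sum fun α _ => Finset.sum_le_sum fun a _ => ?_
  exact Finset.single_le_sum
    (f := fun α' => ∑ b, Fintype.card ι * meanSq ν (unitDer (α, a) (α', b) (F (β, l) s)))
    (fun α' _ => Finset.sum_nonneg fun b _ => mul_nonneg (by simp) (meanSq_nonneg _ _))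
    (Finset.mem_univ α)

end InvMeasure

end Bipartite

section LowerBound

lemma energy_nonneg {I J R : Type*} [Fintype J] [Fintype R] (ν : Measure (Matrix I I ℂ))
    (D : J → J → Derivation ℂ (EntryPoly I) (EntryPoly I)) (F : Matrix J R (EntryPoly I)) :
    0 ≤ energy ν D F :=
  Finset.sum_nonneg fun _ _ => Finset.sum_nonneg fun _ _ => Finset.sum_nonneg fun _ _ =>
    Finset.sum_nonneg fun _ _ => meanSq_nonneg ν _

/-- The constant in front of the error term of `InvMeasure.le_form_reduction_mul`. -/
def redErrConst (k r a s t : ℝ) : ℝ :=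
  errConst r a s t * (k ^ 2 - 1) + (a + t - t⁻¹ * s) * (k + 1)

lemma errConst_nonneg {r a s t : ℝ} (ha : 0 ≤ a) (hs : 0 ≤ s) (ht : 0 < t) :
    0 ≤ errConst r a s t := by
  rw [errConst]
  positivity

lemma redErrConst_nonneg {k r a s t : ℝ} (hk : 1 ≤ k) (ha : 0 ≤ a) (hs : 0 ≤ s) (ht : 0 < t)
    (hw : 0 ≤ a + t - t⁻¹ * s) : 0 ≤ redErrConst k r a s t :=
  add_nonneg (mul_nonneg (errConst_nonneg ha hs ht) (sub_nonneg.2 (one_le_pow₀ hk)))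
    (mul_nonneg hw (by linarith))

lemma inv_card_prod_sq_le (ι J : Type*) [Fintype ι] [Fintype J] [Nonempty ι] :
    ((Fintype.card (ι × J) : ℝ) ^ 2)⁻¹ ≤ ((Fintype.card J : ℝ) ^ 2)⁻¹ := by
  have hι : (1 : ℝ) ≤ ((Fintype.card ι : ℝ) ^ 2) := one_le_pow₀ (mod_cast Fintype.card_pos)
  rw [Fintype.card_prod, Nat.cast_mul, mul_pow, mul_inv]
  exact mul_le_of_le_one_left (by positivity) (inv_le_one_of_one_le₀ hι)

/-- The lower edge of the spectrum of `reduction X` that `InvMeasure.le_form_reduction_mul` predicts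
under `SpectralBounds a r m₁ m₂ s X`, for a free parameter `t`. -/
def redEdge (k a m₁ m₂ s t : ℝ) : ℝ := (k ^ 2 - 1) * m₁ - (m₂ - a + t) - (k ^ 2 - 2) * (t⁻¹ * s)

namespace InvMeasure

section AvgDiv

variable {I J R : Type*} [Fintype I] [DecidableEq I] [Fintype J] [DecidableEq J] [Nonempty J]
  [Fintype R] {ν : Measure (Matrix I I ℂ)} [IsFiniteMeasure ν] {r : ℝ}
  {D : J → J → Derivation ℂ (EntryPoly I) (EntryPoly I)}

lemma neg_energy_le_form_avgDiv (h : InvMeasure ν r) (hD : GLAction (conjPoly I) h.expect D)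
    (F : Matrix J R (EntryPoly I)) :
    -(((Fintype.card J : ℝ) ^ 2)⁻¹ * energy ν D F) ≤ h.form F (avgDiv D F) := by
  linarith [(abs_le.1 (h.abs_form_avgDiv_sub_le hD F)).2, h.form_self_nonneg (avgDiv D F)]

lemma form_avgDiv_le (h : InvMeasure ν r) (hD : GLAction (conjPoly I) h.expect D)
    (F : Matrix J R (EntryPoly I)) :
    h.form F (avgDiv D F) ≤ h.form F F + ((Fintype.card J : ℝ) ^ 2)⁻¹ * energy ν D F := by
  linarith [(abs_le.1 (h.abs_form_avgDiv_sub_le hD F)).2, h.form_sub_avgDiv_self hD F,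
    h.form_self_nonneg (F - avgDiv D F)]

end AvgDiv

variable {ι J R : Type*} [Fintype ι] [DecidableEq ι] [Nonempty ι] [Fintype J] [DecidableEq J]
  [Nonempty J] [Fintype R] {ν : Measure (Matrix (ι × J) (ι × J) ℂ)} [IsFiniteMeasure ν] {r : ℝ}

lemma form_regroup_avgDiv_sub_le (h : InvMeasure ν r)
    (F : Matrix (ι × J) R (EntryPoly (ι × J))) :
    h.form (regroup F) (avgDiv (partDer ι) (regroup F)) - h.form F (avgDiv unitDer F) ≤
      h.form F F +
        (Fintype.card ι + 1) * (((Fintype.card J : ℝ) ^ 2)⁻¹ * energy ν unitDer F) := by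
  have hregroup : h.form (regroup F) (regroup F) = h.form F F := by
    rw [form, pairing_regroup, form]
  have hpart := h.form_avgDiv_le h.glAction.partDer (regroup F)
  have hfull := h.neg_energy_le_form_avgDiv h.glAction F
  have hpartEnergy : ((Fintype.card J : ℝ) ^ 2)⁻¹ * energy ν (partDer ι) (regroup F) ≤
      ((Fintype.card J : ℝ) ^ 2)⁻¹ * (Fintype.card ι * energy ν unitDer F) := by
    gcongr
    exact h.energy_regroup_le F
  have hfullEnergy := mul_le_mul_of_nonneg_right (inv_card_prod_sq_le ι J)
    (energy_nonneg ν unitDer F)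
  linarith

lemma le_form_reduction_mul (h : InvMeasure ν r) {a m₁ m₂ s t : ℝ}
    (hν : ∀ᵐ x ∂ν, SpectralBounds a r m₁ m₂ s x) (ht : 0 < t) (hs : 0 ≤ s) (ha : a ≤ m₂)
    (hw : 0 ≤ m₂ - a + t - t⁻¹ * s) (F : Matrix (ι × J) R (EntryPoly (ι × J))) :
    redEdge (Fintype.card ι) a m₁ m₂ s t * h.form F F
      - redErrConst (Fintype.card ι) r (m₂ - a) s t *
        (((Fintype.card J : ℝ) ^ 2)⁻¹ * energy ν unitDer F)
      ≤ h.form F (reduction (genMat (ι × J)) * F) := by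
  have hspread := h.le_form_genMat_mul hν ht hs ha (spread F)
  rw [form_spread_spread, form_spread_mul, form_spread_avgDiv, h.energy_spread] at hspread
  have hk : (1 : ℝ) ≤ Fintype.card ι := mod_cast Fintype.card_pos
  have hdiv := mul_le_mul_of_nonneg_left (h.form_regroup_avgDiv_sub_le F) hw
  have henergy := mul_le_mul_of_nonneg_left
    (mul_le_mul_of_nonneg_right (inv_card_prod_sq_le ι J) (energy_nonneg ν unitDer F))
    (mul_nonneg (errConst_nonneg (r := r) (sub_nonneg.2 ha) hs ht)
      (sub_nonneg.2 (one_le_pow₀ hk : (1 : ℝ) ≤ (Fintype.card ι : ℝ) ^ 2)))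
  rw [redEdge, redErrConst]
  refine le_of_mul_le_mul_left ?_ (zero_lt_one.trans_le hk)
  nlinarith [mul_le_mul_of_nonneg_left (add_le_add hdiv henergy) (zero_le_one.trans hk)]

end InvMeasure

end LowerBound

section HilbertSchmidt

open scoped Matrix.Norms.L2Operator

variable {I J R : Type*} [Fintype I] [Fintype J] [Fintype R]

/-- The squared Hilbert-Schmidt norm. -/
def hsSq (y : Matrix J R ℂ) : ℝ := hsInner y y

lemma hsSq_eq_sum (y : Matrix J R ℂ) : hsSq y = ∑ j, ∑ r, ‖y j r‖ ^ 2 := by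
  have hnorm (z : ℂ) : (star z * z).re = ‖z‖ ^ 2 := by
    rw [Complex.star_def, Complex.conj_mul']
    norm_cast
  simp only [hsSq, hsInner, Matrix.trace, Matrix.diag_apply, Matrix.mul_apply,
    Matrix.conjTranspose_apply, Complex.re_sum, hnorm]
  rw [Finset.sum_comm]

lemma hsSq_nonneg (y : Matrix J R ℂ) : 0 ≤ hsSq y := hsInner_self_nonneg y

lemma hsSq_conjTranspose (y : Matrix J R ℂ) : hsSq yᴴ = hsSq y := by
  rw [hsSq, hsInner, Matrix.conjTranspose_conjTranspose, Matrix.trace_mul_comm, hsSq, hsInner]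

lemma hsSq_sum_le {κ : Type*} (s : Finset κ) (y : κ → Matrix J R ℂ) :
    hsSq (∑ k ∈ s, y k) ≤ s.card * ∑ k ∈ s, hsSq (y k) := by
  have hentry (i : J) (j : R) : ‖(∑ k ∈ s, y k) i j‖ ^ 2 ≤ s.card * ∑ k ∈ s, ‖y k i j‖ ^ 2 := by
    rw [Matrix.sum_apply]
    exact (pow_le_pow_left₀ (norm_nonneg _) (norm_sum_le _ _) 2).trans sq_sum_le_card_mul_sum_sq
  simp only [hsSq_eq_sum]
  refine (Finset.sum_le_sum fun i _ => Finset.sum_le_sum fun j _ => hentry i j).trans_eq ?_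
  simp only [← Finset.mul_sum]
  rw [Finset.sum_congr rfl fun i _ => Finset.sum_comm, Finset.sum_comm]

variable [DecidableEq I]

lemma hsSq_mul_le_right (y : Matrix J I ℂ) (a : Matrix I I ℂ) :
    hsSq (y * a) ≤ ‖a‖ ^ 2 * hsSq y := by
  rw [hsSq_eq_sum, hsSq_eq_sum, Finset.mul_sum]
  simp only [Matrix.mul_apply, mul_comm (y _ _)]
  exact Finset.sum_le_sum fun i _ => sum_norm_vecMul_le a _

lemma hsSq_mul_le_left (a : Matrix I I ℂ) (y : Matrix I R ℂ) :
    hsSq (a * y) ≤ ‖a‖ ^ 2 * hsSq y := by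
  simpa only [← Matrix.conjTranspose_mul, hsSq_conjTranspose, Matrix.l2_opNorm_conjTranspose]
    using hsSq_mul_le_right yᴴ aᴴ

lemma sum_hsSq_mul_single_mul (y z : Matrix I I ℂ) :
    ∑ i, ∑ j, hsSq (y * Matrix.single i j 1 * z) = hsSq y * hsSq z := by
  have hentry (i j a b : I) : (y * Matrix.single i j (1 : ℂ) * z) a b = y a i * z j b := by
    rw [Matrix.mul_apply, Finset.sum_eq_single j]
    · simp
    · intro k _ hk
      rw [Matrix.mul_single_apply_of_ne _ _ _ _ _ hk, zero_mul]
    · simp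
  simp only [hsSq_eq_sum, hentry, norm_mul, mul_pow, Finset.sum_mul]
  rw [Finset.sum_congr rfl fun i _ => Finset.sum_comm, Finset.sum_comm]
  simp only [← Finset.mul_sum, ← Finset.sum_mul]

lemma sum_hsSq_mul_elementary_mul_le {κ : Type*} [Fintype κ] {a b : κ → Matrix I I ℂ} {α β : ℝ}
    (ha : ∀ k, ‖a k‖ ≤ α) (hb : ∀ k, ‖b k‖ ≤ β) (y z : Matrix I I ℂ) :
    ∑ i, ∑ j, hsSq (y * (∑ k, a k * Matrix.single i j 1 * b k) * z) ≤
      (Fintype.card κ * (α * β)) ^ 2 * (hsSq y * hsSq z) := by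
  have hcauchy (i j : I) : hsSq (y * (∑ k, a k * Matrix.single i j 1 * b k) * z) ≤
      Fintype.card κ * ∑ k, hsSq ((y * a k) * Matrix.single i j 1 * (b k * z)) := by
    have hdistrib : y * (∑ k, a k * Matrix.single i j 1 * b k) * z =
        ∑ k, (y * a k) * Matrix.single i j 1 * (b k * z) := by
      simp only [Finset.mul_sum, Finset.sum_mul, Matrix.mul_assoc]
    rw [hdistrib]
    exact hsSq_sum_le _ _
  have hterm (k : κ) : hsSq (y * a k) * hsSq (b k * z) ≤ (α * β) ^ 2 * (hsSq y * hsSq z) :=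
    calc hsSq (y * a k) * hsSq (b k * z)
      _ ≤ (α ^ 2 * hsSq y) * (β ^ 2 * hsSq z) := by
        have hy := hsSq_nonneg y
        have hz := hsSq_nonneg z
        gcongr
        · exact hsSq_nonneg _
        · exact (hsSq_mul_le_right _ _).trans (by gcongr; exact ha k)
        · exact (hsSq_mul_le_left _ _).trans (by gcongr; exact hb k)
      _ = (α * β) ^ 2 * (hsSq y * hsSq z) := by ring
  calc ∑ i, ∑ j, hsSq (y * (∑ k, a k * Matrix.single i j 1 * b k) * z)
    _ ≤ ∑ i, ∑ j, Fintype.card κ * ∑ k, hsSq ((y * a k) * Matrix.single i j 1 * (b k * z)) := by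
      gcongr with i _ j
      exact hcauchy i j
    _ = Fintype.card κ * ∑ k, hsSq (y * a k) * hsSq (b k * z) := by
      simp only [← Finset.mul_sum, ← sum_hsSq_mul_single_mul]
      rw [Finset.sum_congr rfl fun i _ => Finset.sum_comm, Finset.sum_comm]
    _ ≤ Fintype.card κ * ∑ _k : κ, (α * β) ^ 2 * (hsSq y * hsSq z) := by
      exact mul_le_mul_of_nonneg_left (Finset.sum_le_sum fun k _ => hterm k) (Nat.cast_nonneg _)
    _ = (Fintype.card κ * (α * β)) ^ 2 * (hsSq y * hsSq z) := by
      rw [Finset.sum_const, Finset.card_univ, nsmul_eq_mul]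
      ring

end HilbertSchmidt

section Eigenvalues

open scoped Matrix.Norms.L2Operator MatrixOrder

variable {I : Type*} [Fintype I] [DecidableEq I] {y : Matrix I I ℂ}

lemma trace_pow_eq_sum_eigenvalues (hy : y.IsHermitian) (k : ℕ) :
    (y ^ k).trace = ∑ i, (hy.eigenvalues i : ℂ) ^ k := by
  conv_lhs => rw [hy.spectral_theorem, ← map_pow, Unitary.conjStarAlgAut_apply,
    Matrix.trace_mul_cycle, Matrix.diagonal_pow]
  simp [Matrix.trace]

lemma posSemidef_smul_add_iff (hy : y.IsHermitian) (e c : ℝ) :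
    ((e : ℂ) • y + (c : ℂ) • (1 : Matrix I I ℂ)).PosSemidef ↔
      ∀ i, 0 ≤ e * hy.eigenvalues i + c := by
  have hdiag : (e : ℂ) • y + (c : ℂ) • (1 : Matrix I I ℂ) =
      Unitary.conjStarAlgAut ℂ _ hy.eigenvectorUnitary
        (Matrix.diagonal fun i => ((e * hy.eigenvalues i + c : ℝ) : ℂ)) := by
    conv_lhs => rw [hy.spectral_theorem]
    rw [← map_one (Unitary.conjStarAlgAut ℂ _ hy.eigenvectorUnitary), ← map_smul, ← map_smul,
      ← map_add, ← Matrix.diagonal_one, ← Matrix.diagonal_smul, ← Matrix.diagonal_smul,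
      Matrix.diagonal_add]
    congr with i
    simp
  rw [hdiag, Unitary.conjStarAlgAut_apply, Matrix.IsUnit.posSemidef_star_right_conjugate_iff
    Unitary.isUnit_coe, Matrix.posSemidef_diagonal_iff]
  simp only [Complex.zero_le_real]

lemma le_eigenvalues_of_posSemidef_sub_smul_one (hy : y.IsHermitian) {c : ℝ}
    (hc : (y - (c : ℂ) • (1 : Matrix I I ℂ)).PosSemidef) (i : I) : c ≤ hy.eigenvalues i := by
  have hnonneg := (posSemidef_smul_add_iff hy 1 (-c)).1 (by simpa [sub_eq_add_neg] using hc) i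
  linarith

lemma posSemidef_smul_one_sub_of_eigenvalues_le (hy : y.IsHermitian) {c : ℝ}
    (hc : ∀ i, hy.eigenvalues i ≤ c) : ((c : ℂ) • (1 : Matrix I I ℂ) - y).PosSemidef := by
  have hpsd := (posSemidef_smul_add_iff hy (-1) c).2 fun i => by linarith [hc i]
  simpa [add_comm, sub_eq_add_neg] using hpsd

lemma posSemidef_smul_one_sub_of_norm_le (hy : y.IsHermitian) {c : ℝ} (hc : ‖y‖ ≤ c) :
    ((c : ℂ) • (1 : Matrix I I ℂ) - y).PosSemidef := by
  let _ : CStarAlgebra (Matrix I I ℂ) := {}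
  have hle := (IsSelfAdjoint.le_algebraMap_norm_self (a := y) hy).trans
    (algebraMap_mono (Matrix I I ℂ) hc)
  rwa [Matrix.le_iff, Algebra.algebraMap_eq_smul_one] at hle

lemma hsSq_pow (hy : y.IsHermitian) (k : ℕ) : hsSq (y ^ k) = ∑ i, hy.eigenvalues i ^ (2 * k) := by
  rw [hsSq, hsInner, (hy.pow k).eq, ← pow_add, ← two_mul, trace_pow_eq_sum_eigenvalues hy]
  norm_cast

lemma hsInner_pow_mul_pow (hy : y.IsHermitian) (k : ℕ) :
    hsInner (y ^ k) (y * y ^ k) = ∑ i, hy.eigenvalues i ^ (2 * k + 1) := by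
  rw [hsInner, (hy.pow k).eq, ← pow_succ', ← pow_add, ← add_assoc, ← two_mul,
    trace_pow_eq_sum_eigenvalues hy]
  norm_cast

-- Chebyshev's sum inequality applied to the powers of the eigenvalues.
lemma hsSq_pow_mul_hsSq_pow_le (hy : y.IsHermitian) (hone : ∀ i, 1 ≤ hy.eigenvalues i) {k l q : ℕ}
    (hq : k + l ≤ q) : hsSq (y ^ k) * hsSq (y ^ l) ≤ Fintype.card I * hsSq (y ^ q) := by
  simp only [hsSq_pow hy]
  have hmono (k : ℕ) (i j : I) (hij : hy.eigenvalues i ≤ hy.eigenvalues j) :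
      hy.eigenvalues i ^ k ≤ hy.eigenvalues j ^ k :=
    pow_le_pow_left₀ (zero_le_one.trans (hone i)) hij k
  have hmonovary : MonovaryOn (fun i => hy.eigenvalues i ^ (2 * k))
      (fun i => hy.eigenvalues i ^ (2 * l)) ((Finset.univ : Finset I) : Set I) := by
    intro i _ j _ hij
    refine hmono _ _ _ (le_of_not_gt fun hlt => ?_)
    exact absurd (hmono (2 * l) j i hlt.le) (not_le.mpr hij)
  refine hmonovary.sum_mul_sum_le_card_mul_sum.trans ?_
  rw [Finset.card_univ]
  gcongr with i
  rw [← pow_add]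
  exact pow_le_pow_right₀ (hone i) (by omega)

end Eigenvalues

section ReductionOnMatrices

open scoped Matrix.Norms.L2Operator

variable {ι J : Type*} [Fintype ι] [DecidableEq ι]

lemma isHermitian_reduction {y : Matrix (ι × J) (ι × J) ℂ} (hy : y.IsHermitian) :
    (reduction y).IsHermitian := by
  ext p q
  obtain h | h := eq_or_ne p.1 q.1
  · simp [reduction, h, hy.apply]
  · simp [reduction, h, h.symm, hy.apply]

lemma evalMat_reduction (x : Matrix (ι × J) (ι × J) ℂ)
    (c : Matrix (ι × J) (ι × J) (EntryPoly (ι × J))) :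
    evalMat x (reduction c) = reduction (evalMat x c) :=
  (reduction_map (evalAt x) c).symm

variable [DecidableEq J]

/-- Left coefficients of `reduction` as an elementary operator. -/
def redLeft (ι J : Type*) [Fintype ι] [DecidableEq ι] [DecidableEq J] :
    Option (ι × ι) → Matrix (ι × J) (ι × J) ℂ
  | none => -1
  | some k => (Fintype.card ι : ℂ) • (Matrix.single k.1 k.2 (1 : ℂ) ⊗ₖ (1 : Matrix J J ℂ))

/-- Right coefficients of `reduction` as an elementary operator. -/
def redRight (ι J : Type*) [DecidableEq ι] [DecidableEq J] :
    Option (ι × ι) → Matrix (ι × J) (ι × J) ℂ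
  | none => 1
  | some k => Matrix.single k.2 k.1 (1 : ℂ) ⊗ₖ (1 : Matrix J J ℂ)

variable [Fintype J]

lemma single_kronecker_one_mul_mul (β γ : ι) (y : Matrix (ι × J) (ι × J) ℂ) :
    Matrix.single β γ (1 : ℂ) ⊗ₖ (1 : Matrix J J ℂ) * y *
      (Matrix.single γ β (1 : ℂ) ⊗ₖ (1 : Matrix J J ℂ)) =
      Matrix.of fun p q => if p.1 = β ∧ q.1 = β then y (γ, p.2) (γ, q.2) else 0 := by
  ext ⟨p, a⟩ ⟨q, b⟩
  simp only [Matrix.mul_apply, Fintype.sum_prod_type, Matrix.kroneckerMap_apply,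
    Matrix.single_apply, Matrix.one_apply, Matrix.of_apply, mul_ite, mul_one, mul_zero, ite_mul,
    one_mul, zero_mul]
  rw [Finset.sum_eq_single γ (by intro k _ hk; simp [hk.symm]) (by simp),
    Finset.sum_eq_single b (by intro k _ hk; simp [hk]) (by simp),
    Finset.sum_eq_single γ (by intro k _ hk; simp [hk.symm]) (by simp),
    Finset.sum_eq_single a (by intro k _ hk; simp [hk.symm]) (by simp)]
  grind

lemma reduction_eq_sum (y : Matrix (ι × J) (ι × J) ℂ) :
    reduction y = ∑ k, redLeft ι J k * y * redRight ι J k := by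
  rw [Fintype.sum_option, Fintype.sum_prod_type]
  simp only [redLeft, redRight, Matrix.smul_mul, single_kronecker_one_mul_mul]
  ext ⟨p, a⟩ ⟨q, b⟩
  have hpartial : (∑ β, ∑ γ, (Fintype.card ι : ℂ) *
      (if p = β ∧ q = β then y (γ, a) (γ, b) else 0)) =
      Fintype.card ι * (if p = q then ∑ α, y (α, a) (α, b) else 0) := by
    rw [Finset.sum_eq_single p (by intro k _ hk; simp [hk.symm]) (by simp), ← Finset.mul_sum]
    obtain rfl | h := eq_or_ne p q
    · simp
    · simp [h, h.symm]
  simp only [reduction, Matrix.of_apply, Matrix.add_apply, Matrix.sum_apply, Matrix.smul_apply,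
    smul_eq_mul, Matrix.neg_mul, Matrix.one_mul, Matrix.mul_one, Matrix.neg_apply, hpartial]
  ring

lemma norm_single_kronecker_one_le (β γ : ι) :
    ‖Matrix.single β γ (1 : ℂ) ⊗ₖ (1 : Matrix J J ℂ)‖ ≤ 1 := by
  set u := Matrix.single β γ (1 : ℂ) ⊗ₖ (1 : Matrix J J ℂ) with hu
  have hproj : uᴴ * u = Matrix.diagonal fun p : ι × J => if p.1 = γ then (1 : ℂ) else 0 := by
    rw [hu, Matrix.conjTranspose_kronecker, ← Matrix.mul_kronecker_mul, Matrix.conjTranspose_single,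
      star_one, Matrix.single_mul_single_same, mul_one, Matrix.conjTranspose_one, mul_one,
      ← Matrix.diagonal_single, ← Matrix.diagonal_one, Matrix.diagonal_kronecker_diagonal]
    congr with p
    simp [Pi.single_apply]
  have hsq : ‖u‖ * ‖u‖ ≤ 1 := by
    rw [← Matrix.l2_opNorm_conjTranspose_mul_self, hproj, Matrix.l2_opNorm_diagonal]
    refine (pi_norm_le_iff_of_nonneg zero_le_one).mpr fun p => ?_
    split_ifs <;> simp
  nlinarith [norm_nonneg u]

variable [Nonempty ι] [Nonempty J]

lemma norm_redLeft_le (k : Option (ι × ι)) : ‖redLeft ι J k‖ ≤ Fintype.card ι := by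
  obtain _ | k := k
  · rw [redLeft, norm_neg, CStarRing.norm_one]
    exact_mod_cast Fintype.card_pos
  · rw [redLeft, norm_smul, Complex.norm_natCast]
    exact mul_le_of_le_one_right (by positivity) (norm_single_kronecker_one_le _ _)

lemma norm_redRight_le (k : Option (ι × ι)) : ‖redRight ι J k‖ ≤ 1 := by
  obtain _ | k := k
  · exact CStarRing.norm_one.le
  · exact norm_single_kronecker_one_le _ _

lemma norm_reduction_le (y : Matrix (ι × J) (ι × J) ℂ) :
    ‖reduction y‖ ≤ ((Fintype.card ι : ℝ) ^ 2 + 1) * Fintype.card ι * ‖y‖ := by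
  have hterm (k : Option (ι × ι)) : ‖redLeft ι J k * y * redRight ι J k‖ ≤ Fintype.card ι * ‖y‖ :=
    calc ‖redLeft ι J k * y * redRight ι J k‖
      _ ≤ ‖redLeft ι J k‖ * ‖y‖ * ‖redRight ι J k‖ := norm_mul₃_le
      _ ≤ Fintype.card ι * ‖y‖ * 1 := by
        gcongr
        · exact norm_redLeft_le k
        · exact norm_redRight_le k
      _ = Fintype.card ι * ‖y‖ := mul_one _
  rw [reduction_eq_sum]
  refine (norm_sum_le_of_le _ fun k _ => hterm k).trans_eq ?_
  rw [Finset.sum_const, Finset.card_univ, Fintype.card_option, Fintype.card_prod, nsmul_eq_mul]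
  push_cast
  ring

end ReductionOnMatrices

section EnergyOfPowers

open scoped Matrix.Norms.L2Operator

lemma map_derivation_pow {I 𝔓 : Type*} [Fintype I] [DecidableEq I] [CommRing 𝔓] [Algebra ℂ 𝔓]
    (D : Derivation ℂ 𝔓 𝔓) (c : Matrix I I 𝔓) (q : ℕ) :
    (c ^ q).map D = ∑ k ∈ Finset.range q, c ^ k * c.map D * c ^ (q - 1 - k) := by
  induction q with
  | zero =>
    ext i j
    simp [Matrix.one_apply, apply_ite D]
  | succ q ih =>
    rw [pow_succ, map_derivation_mul, ih, Finset.sum_range_succ, Finset.sum_mul]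
    congr 1
    · refine Finset.sum_congr rfl fun k hk => ?_
      rw [Matrix.mul_assoc, ← pow_succ]
      congr 2
      have := Finset.mem_range.mp hk
      omega
    · simp

lemma evalMat_sum {I K L κ : Type*} (x : Matrix I I ℂ) (s : Finset κ)
    (c : κ → Matrix K L (EntryPoly I)) :
    evalMat x (∑ k ∈ s, c k) = ∑ k ∈ s, evalMat x (c k) := by
  ext p q
  simp [evalMat, Matrix.sum_apply]

lemma evalMat_pow {I J : Type*} [Fintype J] [DecidableEq J] (x : Matrix I I ℂ)
    (c : Matrix J J (EntryPoly I)) (q : ℕ) : evalMat x (c ^ q) = evalMat x c ^ q :=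
  map_pow (evalAt x).toRingHom.mapMatrix c q

lemma sum_hsSq_pow_map_le {I : Type*} [Fintype I] [DecidableEq I] {x y : Matrix I I ℂ}
    {c : Matrix I I (EntryPoly I)} (hc : evalMat x c = y) (hy : y.IsHermitian)
    (hone : ∀ i, 1 ≤ hy.eigenvalues i) {κ : Type*} [Fintype κ] {a b : κ → Matrix I I ℂ} {α β : ℝ}
    (ha : ∀ k, ‖a k‖ ≤ α) (hb : ∀ k, ‖b k‖ ≤ β)
    (hder : ∀ i j, evalMat x (c.map (unitDer i j)) = ∑ k, a k * Matrix.single i j 1 * b k) (q : ℕ) :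
    ∑ i, ∑ j, hsSq (evalMat x ((c ^ q).map (unitDer i j))) ≤
      (Fintype.card κ * (α * β)) ^ 2 * q ^ 2 * Fintype.card I * hsSq (y ^ q) := by
  set C := (Fintype.card κ * (α * β)) ^ 2
  have hleibniz (i j : I) : hsSq (evalMat x ((c ^ q).map (unitDer i j))) ≤
      q * ∑ k ∈ Finset.range q, hsSq (y ^ k *
        (∑ l, a l * Matrix.single i j 1 * b l) * y ^ (q - 1 - k)) := by
    rw [map_derivation_pow, evalMat_sum]
    refine (hsSq_sum_le _ _).trans_eq ?_
    rw [Finset.card_range]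
    simp only [evalMat_mul, evalMat_pow, hc, hder]
  have hterm (k : ℕ) (hk : k ∈ Finset.range q) : ∑ i, ∑ j, hsSq (y ^ k *
      (∑ l, a l * Matrix.single i j 1 * b l) * y ^ (q - 1 - k)) ≤
      C * (Fintype.card I * hsSq (y ^ q)) := by
    refine (sum_hsSq_mul_elementary_mul_le ha hb _ _).trans ?_
    refine mul_le_mul_of_nonneg_left ?_ (sq_nonneg _)
    have := Finset.mem_range.mp hk
    exact hsSq_pow_mul_hsSq_pow_le hy hone (by omega)
  calc ∑ i, ∑ j, hsSq (evalMat x ((c ^ q).map (unitDer i j)))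
    _ ≤ ∑ i, ∑ j, q * ∑ k ∈ Finset.range q, hsSq (y ^ k *
        (∑ l, a l * Matrix.single i j 1 * b l) * y ^ (q - 1 - k)) :=
      Finset.sum_le_sum fun i _ => Finset.sum_le_sum fun j _ => hleibniz i j
    _ = q * ∑ k ∈ Finset.range q, ∑ i, ∑ j, hsSq (y ^ k *
        (∑ l, a l * Matrix.single i j 1 * b l) * y ^ (q - 1 - k)) := by
      simp only [← Finset.mul_sum]
      rw [Finset.sum_congr rfl fun i _ => Finset.sum_comm, Finset.sum_comm]
    _ ≤ q * ∑ _k ∈ Finset.range q, C * (Fintype.card I * hsSq (y ^ q)) :=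
      mul_le_mul_of_nonneg_left (Finset.sum_le_sum hterm) (Nat.cast_nonneg _)
    _ = C * q ^ 2 * Fintype.card I * hsSq (y ^ q) := by
      rw [Finset.sum_const, Finset.card_range, nsmul_eq_mul]
      ring

section Shifted

variable {ι J : Type*} [Fintype ι] [DecidableEq ι] [DecidableEq J]

/-- The matrix `K - reduction X` with polynomial entries. For large `K` it is positive, and its
upper spectral edge is `K` minus the lower spectral edge of `reduction X`. -/
def shifted (ι J : Type*) [Fintype ι] [DecidableEq ι] [DecidableEq J] (K : ℝ) :
    Matrix (ι × J) (ι × J) (EntryPoly (ι × J)) :=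
  (K : ℂ) • 1 - reduction (genMat (ι × J))

lemma evalMat_shifted (x : Matrix (ι × J) (ι × J) ℂ) (K : ℝ) :
    evalMat x (shifted ι J K) = (K : ℂ) • 1 - reduction x := by
  rw [shifted, evalMat_sub, evalMat_reduction, evalMat_genMat]
  congr
  ext p q
  simp [evalMat, Matrix.one_apply, apply_ite (evalAt x), -Complex.coe_smul]

lemma isHermitian_evalMat_shifted {x : Matrix (ι × J) (ι × J) ℂ} (hx : x.IsHermitian) (K : ℝ) :
    (evalMat x (shifted ι J K)).IsHermitian := by
  rw [evalMat_shifted]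
  exact (Matrix.isHermitian_one.smul (Complex.conj_ofReal K)).sub (isHermitian_reduction hx)

lemma shifted_map_unitDer (K : ℝ) (i j : ι × J) :
    (shifted ι J K).map (unitDer i j) = -reduction ((genMat (ι × J)).map (unitDer i j)) := by
  rw [reduction_map]
  ext p q : 2
  simp [shifted, Matrix.one_apply, apply_ite (unitDer i j)]

variable [Fintype J]

lemma evalMat_shifted_map_unitDer (x : Matrix (ι × J) (ι × J) ℂ) (K : ℝ) (i j : ι × J) :
    evalMat x ((shifted ι J K).map (unitDer i j)) =
      ∑ k, Sum.elim (fun k => -redLeft ι J k) (fun k => redLeft ι J k * x) k *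
        Matrix.single i j 1 *
        Sum.elim (fun k => x * redRight ι J k) (redRight ι J) k := by
  have hsingle : evalMat x (Matrix.single i j (1 : EntryPoly (ι × J))) = Matrix.single i j 1 := by
    simp [evalMat, Matrix.map_single]
  have hneg (c : Matrix (ι × J) (ι × J) (EntryPoly (ι × J))) : evalMat x (-c) = -evalMat x c :=
    map_neg (evalAt x).toRingHom.mapMatrix c
  rw [shifted_map_unitDer, actsByCommutator_genMat, hneg, evalMat_reduction, evalMat_sub,
    evalMat_mul, evalMat_mul, evalMat_genMat, hsingle, reduction_eq_sum, Fintype.sum_sum_type,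
    ← Finset.sum_neg_distrib, ← Finset.sum_add_distrib]
  refine Finset.sum_congr rfl fun k _ => ?_
  simp only [Sum.elim_inl, Sum.elim_inr, Matrix.mul_sub, Matrix.sub_mul, Matrix.neg_mul,
    Matrix.mul_assoc]
  abel

/-- The constant in `InvMeasure.energy_shifted_pow_le`. -/
def energyConst (k r : ℝ) : ℝ := (2 * (k ^ 2 + 1) * (k * (1 + r) * (1 + r))) ^ 2

variable [Nonempty ι] [Nonempty J]

lemma sum_hsSq_shifted_pow_map_le {x : Matrix (ι × J) (ι × J) ℂ} {r K : ℝ} (hr : ‖x‖ ≤ r)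
    (hy : (evalMat x (shifted ι J K)).IsHermitian) (hone : ∀ i, 1 ≤ hy.eigenvalues i) (q : ℕ) :
    ∑ i, ∑ j, hsSq (evalMat x ((shifted ι J K ^ q).map (unitDer i j))) ≤
      energyConst (Fintype.card ι) r * q ^ 2 * Fintype.card (ι × J) *
        hsSq (evalMat x (shifted ι J K ^ q)) := by
  have hr₀ : 0 ≤ r := (norm_nonneg _).trans hr
  have hleft : ∀ k, ‖Sum.elim (fun k => -redLeft ι J k) (fun k => redLeft ι J k * x) k‖ ≤
      Fintype.card ι * (1 + r) := by
    rintro (k | k) <;> have hk := norm_redLeft_le (J := J) k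
    · simpa using hk.trans (le_mul_of_one_le_right (by positivity) (by linarith))
    · calc ‖redLeft ι J k * x‖
        _ ≤ ‖redLeft ι J k‖ * ‖x‖ := norm_mul_le _ _
        _ ≤ Fintype.card ι * (1 + r) := by gcongr; linarith
  have hright : ∀ k, ‖Sum.elim (fun k => x * redRight ι J k) (redRight ι J) k‖ ≤ 1 + r := by
    rintro (k | k) <;> have hk := norm_redRight_le (J := J) k
    · exact (norm_mul_le _ _).trans
        ((mul_le_of_le_one_right (norm_nonneg _) hk).trans (by linarith))
    · exact hk.trans (by linarith)
  rw [evalMat_pow]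
  refine (sum_hsSq_pow_map_le rfl hy hone hleft hright
    (evalMat_shifted_map_unitDer x K) q).trans_eq ?_
  rw [energyConst, Fintype.card_sum, Fintype.card_option, Fintype.card_prod ι ι]
  push_cast
  ring

end Shifted

namespace InvMeasure

lemma form_eq_integral {I J R : Type*} [Fintype I] [DecidableEq I] [Fintype J] [Fintype R]
    {ν : Measure (Matrix I I ℂ)} [IsFiniteMeasure ν] {r : ℝ} (h : InvMeasure ν r)
    (G F : Matrix J R (EntryPoly I)) :
    h.form G F = ∫ x, hsInner (evalMat x G) (evalMat x F) ∂ν := by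
  rw [form_eq]
  exact (integral_re (h.integrable _)).symm.trans
    (integral_congr_ae (h.herm.mono fun _ hx => re_evalAt_dotPoly hx G F))

lemma integrable_hsInner {I J R : Type*} [Fintype I] [DecidableEq I] [Fintype J] [Fintype R]
    {ν : Measure (Matrix I I ℂ)} [IsFiniteMeasure ν] {r : ℝ} (h : InvMeasure ν r)
    (G F : Matrix J R (EntryPoly I)) :
    Integrable (fun x => hsInner (evalMat x G) (evalMat x F)) ν :=
  (h.integrable (dotPoly G F)).re.congr (h.herm.mono fun _ hx => re_evalAt_dotPoly hx G F)

variable {ι J : Type*} [Fintype ι] [DecidableEq ι] [Fintype J] [DecidableEq J] [Nonempty ι]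
  [Nonempty J] {ν : Measure (Matrix (ι × J) (ι × J) ℂ)} [IsFiniteMeasure ν] {r : ℝ}

lemma energy_shifted_pow_le (h : InvMeasure ν r) {K : ℝ}
    (hK : ∀ᵐ x ∂ν, (evalMat x (shifted ι J K) - 1).PosSemidef) (q : ℕ) :
    energy ν unitDer (shifted ι J K ^ q) ≤
      energyConst (Fintype.card ι) r * q ^ 2 * Fintype.card (ι × J) *
        h.form (shifted ι J K ^ q) (shifted ι J K ^ q) := by
  have hint (i j : ι × J) := h.integrable_hsInner ((shifted ι J K ^ q).map (unitDer i j))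
    ((shifted ι J K ^ q).map (unitDer i j))
  rw [h.energy_eq_sum_form]
  simp only [h.form_eq_integral]
  rw [Finset.sum_congr rfl fun i _ => (integral_finsetSum _ fun j _ => hint i j).symm,
    ← integral_finsetSum _ fun i _ => integrable_finsetSum _ fun j _ => hint i j,
    ← integral_const_mul]
  refine integral_mono_ae (integrable_finsetSum _ fun i _ => integrable_finsetSum _ fun j _ =>
    hint i j) ((h.integrable_hsInner _ _).const_mul _) ?_
  filter_upwards [h.herm, h.bdd, hK] with _ hx hr hx1
  have hy := isHermitian_evalMat_shifted hx K
  exact sum_hsSq_shifted_pow_map_le hr hy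
    (le_eigenvalues_of_posSemidef_sub_smul_one hy (by simpa using hx1)) q

end InvMeasure

end EnergyOfPowers

section TailBound

open scoped Matrix.Norms.L2Operator

lemma pow_mul_sub_add_pow_nonneg {u v : ℝ} (hu : 0 ≤ u) (hv : 0 ≤ v) (q : ℕ) :
    0 ≤ u ^ q * (u - v) + v ^ (q + 1) := by
  obtain huv | hvu := le_total u v
  · have hpow : u ^ q * v ≤ v ^ (q + 1) := pow_succ v q ▸ by gcongr
    nlinarith [mul_nonneg (pow_nonneg hu q) hu]
  · have := sub_nonneg.2 hvu
    positivity

section Excess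

variable {I : Type*} [Fintype I] [DecidableEq I] {y : Matrix I I ℂ}

/-- A moment of `y` which, for `y ≥ 0`, is nonnegative and is at least `δ * (v + δ) ^ (2 * q)`
as soon as `y` has an eigenvalue above `v + δ`. -/
def excess (v : ℝ) (q : ℕ) (y : Matrix I I ℂ) : ℝ :=
  hsInner (y ^ q) (y * y ^ q) - v * hsSq (y ^ q) + Fintype.card I * v ^ (2 * q + 1)

lemma excess_eq_sum (hy : y.IsHermitian) (v : ℝ) (q : ℕ) : excess v q y =
    ∑ i, (hy.eigenvalues i ^ (2 * q) * (hy.eigenvalues i - v) + v ^ (2 * q + 1)) := by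
  rw [excess, hsInner_pow_mul_pow hy, hsSq_pow hy, Finset.sum_add_distrib, Finset.sum_const,
    Finset.card_univ, nsmul_eq_mul, Finset.mul_sum, ← Finset.sum_sub_distrib]
  congr! 2
  ring

lemma excess_nonneg (hy : y.PosSemidef) {v : ℝ} (hv : 0 ≤ v) (q : ℕ) : 0 ≤ excess v q y := by
  rw [excess_eq_sum hy.1]
  exact Finset.sum_nonneg fun i _ => pow_mul_sub_add_pow_nonneg (hy.eigenvalues_nonneg i) hv _

lemma le_excess_of_not_posSemidef (hy : y.PosSemidef) {v δ : ℝ} (hv : 0 ≤ v) (hδ : 0 ≤ δ)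
    (hnot : ¬ (((v + δ : ℝ) : ℂ) • (1 : Matrix I I ℂ) - y).PosSemidef) (q : ℕ) :
    δ * (v + δ) ^ (2 * q) ≤ excess v q y := by
  obtain ⟨i, hi⟩ : ∃ i, v + δ < hy.1.eigenvalues i := by
    contrapose! hnot
    exact posSemidef_smul_one_sub_of_eigenvalues_le hy.1 hnot
  rw [excess_eq_sum hy.1]
  calc δ * (v + δ) ^ (2 * q)
    _ ≤ (hy.1.eigenvalues i - v) * hy.1.eigenvalues i ^ (2 * q) := by gcongr <;> linarith
    _ ≤ hy.1.eigenvalues i ^ (2 * q) * (hy.1.eigenvalues i - v) + v ^ (2 * q + 1) := by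
      rw [mul_comm]
      exact le_add_of_nonneg_right (pow_nonneg hv _)
    _ ≤ _ := Finset.single_le_sum (f := fun i => hy.1.eigenvalues i ^ (2 * q) *
        (hy.1.eigenvalues i - v) + v ^ (2 * q + 1))
      (fun j _ => pow_mul_sub_add_pow_nonneg (hy.eigenvalues_nonneg j) hv _) (Finset.mem_univ i)

end Excess

lemma InvMeasure.form_shifted_mul {ι J R : Type*} [Fintype ι] [DecidableEq ι] [Fintype J]
    [DecidableEq J] [Fintype R] {ν : Measure (Matrix (ι × J) (ι × J) ℂ)} [IsFiniteMeasure ν] {r : ℝ}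
    (h : InvMeasure ν r) (K : ℝ) (G F : Matrix (ι × J) R (EntryPoly (ι × J))) :
    h.form G (shifted ι J K * F) =
      K * h.form G F - h.form G (reduction (genMat (ι × J)) * F) := by
  have hscalar : ((K : ℂ) • 1 : Matrix (ι × J) (ι × J) (EntryPoly (ι × J))) * F =
      (K : ℂ) • F := by
    rw [Matrix.smul_mul, Matrix.one_mul]
  rw [form, form, form, shifted, Matrix.sub_mul, pairing_sub_right, hscalar, pairing_smul_right,
    Complex.sub_re, Complex.re_ofReal_mul]

lemma InvMeasure.integrable_excess_shifted {ι J : Type*} [Fintype ι] [DecidableEq ι] [Fintype J]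
    [DecidableEq J] {ν : Measure (Matrix (ι × J) (ι × J) ℂ)} [IsFiniteMeasure ν] {r : ℝ}
    (h : InvMeasure ν r) (K v : ℝ) (q : ℕ) :
    Integrable (fun x => excess v q (evalMat x (shifted ι J K))) ν := by
  have hmul := h.integrable_hsInner (shifted ι J K ^ q) (shifted ι J K * shifted ι J K ^ q)
  have hsq := (h.integrable_hsInner (shifted ι J K ^ q) (shifted ι J K ^ q)).const_mul v
  simp only [evalMat_mul, evalMat_pow] at hmul hsq
  exact (hmul.sub hsq).add (integrable_const _)

variable {ι J : Type*} [Fintype ι] [DecidableEq ι] [Fintype J] [DecidableEq J] [Nonempty ι]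
  [Nonempty J]

lemma posSemidef_evalMat_shifted_sub_one {x : Matrix (ι × J) (ι × J) ℂ} (hx : x.IsHermitian)
    {r K : ℝ} (hr : ‖x‖ ≤ r) (hK : ((Fintype.card ι : ℝ) ^ 2 + 1) * Fintype.card ι * r + 1 ≤ K) :
    (evalMat x (shifted ι J K) - 1).PosSemidef := by
  have hnorm : ‖reduction x‖ ≤ K - 1 := by
    refine (norm_reduction_le x).trans (le_sub_iff_add_le.2 (le_trans ?_ hK))
    gcongr
  convert posSemidef_smul_one_sub_of_norm_le (isHermitian_reduction hx) hnorm using 1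
  rw [evalMat_shifted, Complex.ofReal_sub, Complex.ofReal_one, sub_smul, one_smul, sub_right_comm]

lemma mul_inv_sq_mul_le {e d E c k P δ : ℝ} {q : ℕ} (he : 0 ≤ e) (hd : 0 < d) (hP : 0 ≤ P)
    (hE : E ≤ c * q ^ 2 * (k * d) * P) (hq : e * c * q ^ 2 * k ≤ δ * d) :
    e * ((d ^ 2)⁻¹ * E) ≤ δ * P := by
  calc e * ((d ^ 2)⁻¹ * E)
    _ ≤ e * ((d ^ 2)⁻¹ * (c * q ^ 2 * (k * d) * P)) := by gcongr
    _ = d⁻¹ * (e * c * q ^ 2 * k) * P := by field_simp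
    _ ≤ d⁻¹ * (δ * d) * P := by gcongr
    _ = δ * P := by field_simp

namespace InvMeasure

variable {ν : Measure (Matrix (ι × J) (ι × J) ℂ)} [IsFiniteMeasure ν] {r : ℝ}
  {a m₁ m₂ s t δ K : ℝ} {q : ℕ}

lemma form_shifted_mul_pow_le (h : InvMeasure ν r) (hν : ∀ᵐ x ∂ν, SpectralBounds a r m₁ m₂ s x)
    (ht : 0 < t) (hs : 0 ≤ s) (ha : a ≤ m₂) (hw : 0 ≤ m₂ - a + t - t⁻¹ * s)
    (hK : ∀ᵐ x ∂ν, (evalMat x (shifted ι J K) - 1).PosSemidef)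
    (hq : redErrConst (Fintype.card ι) r (m₂ - a) s t * energyConst (Fintype.card ι) r * q ^ 2 *
      Fintype.card ι ≤ δ * Fintype.card J) :
    h.form (shifted ι J K ^ q) (shifted ι J K * shifted ι J K ^ q) ≤
      (K - redEdge (Fintype.card ι) a m₁ m₂ s t + δ) *
        h.form (shifted ι J K ^ q) (shifted ι J K ^ q) := by
  have henergy := h.energy_shifted_pow_le hK q
  rw [Fintype.card_prod, Nat.cast_mul] at henergy
  have hlower := h.le_form_reduction_mul hν ht hs ha hw (shifted ι J K ^ q)
  have herr := mul_inv_sq_mul_le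
    (redErrConst_nonneg (mod_cast Fintype.card_pos) (sub_nonneg.2 ha) hs ht hw)
    (mod_cast Fintype.card_pos) (h.form_self_nonneg _) henergy hq
  rw [form_shifted_mul]
  linarith

lemma integral_excess_shifted_le (h : InvMeasure ν r) (huniv : ν.real Set.univ ≤ 1) {v : ℝ}
    (hv : 0 ≤ v) (hform : h.form (shifted ι J K ^ q) (shifted ι J K * shifted ι J K ^ q) ≤
      v * h.form (shifted ι J K ^ q) (shifted ι J K ^ q)) :
    ∫ x, excess v q (evalMat x (shifted ι J K)) ∂ν ≤ Fintype.card (ι × J) * v ^ (2 * q + 1) := by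
  have hmul := h.integrable_hsInner (shifted ι J K ^ q) (shifted ι J K * shifted ι J K ^ q)
  have hsq := (h.integrable_hsInner (shifted ι J K ^ q) (shifted ι J K ^ q)).const_mul v
  rw [h.form_eq_integral, h.form_eq_integral, ← integral_const_mul, ← sub_nonpos,
    ← integral_sub hmul hsq] at hform
  have hconst := mul_le_mul_of_nonneg_right huniv
    (by positivity : 0 ≤ (Fintype.card (ι × J) : ℝ) * v ^ (2 * q + 1))
  calc ∫ x, excess v q (evalMat x (shifted ι J K)) ∂ν
    _ = ∫ x, (hsInner (evalMat x (shifted ι J K ^ q))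
          (evalMat x (shifted ι J K * shifted ι J K ^ q)) -
        v * hsInner (evalMat x (shifted ι J K ^ q)) (evalMat x (shifted ι J K ^ q)) +
        Fintype.card (ι × J) * v ^ (2 * q + 1)) ∂ν := by
      simp only [excess, hsSq, evalMat_mul, evalMat_pow]
    _ ≤ _ := by
      rw [integral_add (f := fun x => _ - _) (hmul.sub hsq) (integrable_const _), integral_const,
        smul_eq_mul]
      linarith

-- Markov's inequality for the excess of `K - reduction X` over `K - redEdge + δ`.
lemma measureReal_not_posSemidef_le (h : InvMeasure ν r) (huniv : ν.real Set.univ ≤ 1)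
    (hν : ∀ᵐ x ∂ν, SpectralBounds a r m₁ m₂ s x) (ht : 0 < t) (hs : 0 ≤ s) (ha : a ≤ m₂)
    (hw : 0 ≤ m₂ - a + t - t⁻¹ * s) (hδ : 0 < δ)
    (hK : ((Fintype.card ι : ℝ) ^ 2 + 1) * Fintype.card ι * r + 1 ≤ K)
    (hKz : redEdge (Fintype.card ι) a m₁ m₂ s t ≤ K)
    (hq : redErrConst (Fintype.card ι) r (m₂ - a) s t * energyConst (Fintype.card ι) r * q ^ 2 *
      Fintype.card ι ≤ δ * Fintype.card J) :
    δ * (K - redEdge (Fintype.card ι) a m₁ m₂ s t + δ + δ) ^ (2 * q) *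
      ν.real {x | ¬ (reduction x - ((redEdge (Fintype.card ι) a m₁ m₂ s t - 2 * δ : ℝ) : ℂ) •
        (1 : Matrix (ι × J) (ι × J) ℂ)).PosSemidef} ≤
      Fintype.card (ι × J) * (K - redEdge (Fintype.card ι) a m₁ m₂ s t + δ) ^ (2 * q + 1) := by
  have hshifted : ∀ᵐ x ∂ν, (evalMat x (shifted ι J K) - 1).PosSemidef := by
    filter_upwards [h.herm, h.bdd] with x hx hr
    exact posSemidef_evalMat_shifted_sub_one hx hr hK
  have hpsd : ∀ᵐ x ∂ν, (evalMat x (shifted ι J K)).PosSemidef :=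
    hshifted.mono fun x hx => by simpa using hx.add Matrix.PosSemidef.one
  have hform := h.form_shifted_mul_pow_le hν ht hs ha hw hshifted hq
  set z := redEdge (Fintype.card ι) a m₁ m₂ s t
  have hv : 0 ≤ K - z + δ := by linarith
  refine le_trans ?_ ((mul_meas_ge_le_integral_of_nonneg (hpsd.mono fun x hx =>
    excess_nonneg hx hv q) (h.integrable_excess_shifted K (K - z + δ) q)
      (δ * (K - z + δ + δ) ^ (2 * q))).trans (h.integral_excess_shifted_le huniv hv hform))
  refine mul_le_mul_of_nonneg_left ?_ (by positivity)
  refine ENNReal.toReal_mono (measure_ne_top _ _) (measure_mono_ae ?_)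
  filter_upwards [hpsd] with x hx hbad
  refine le_excess_of_not_posSemidef hx hv hδ.le (fun hle => hbad ?_) q
  convert hle using 1
  rw [evalMat_shifted, ← sub_add, ← sub_smul, ← Complex.ofReal_sub, sub_eq_neg_add, ← neg_smul,
    ← Complex.ofReal_neg]
  ring_nf

end InvMeasure

end TailBound

section Separability

section Cone

variable {n d : ℕ} {x y : Matrix (Fin n × Fin d) (Fin n × Fin d) ℂ}

lemma kronecker_mem_SEP {a : Matrix (Fin n) (Fin n) ℂ} {b : Matrix (Fin d) (Fin d) ℂ}
    (ha : a.PosSemidef) (hb : b.PosSemidef) : a ⊗ₖ b ∈ SEP n d :=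
  ⟨1, fun _ => a, fun _ => b, fun _ => ha, fun _ => hb, by simp⟩

lemma zero_mem_SEP (n d : ℕ) : (0 : Matrix (Fin n × Fin d) (Fin n × Fin d) ℂ) ∈ SEP n d :=
  ⟨0, fun _ => 0, fun _ => 0, fun i => i.elim0, fun i => i.elim0, by simp⟩

lemma add_mem_SEP (hx : x ∈ SEP n d) (hy : y ∈ SEP n d) : x + y ∈ SEP n d := by
  obtain ⟨k, a, b, ha, hb, rfl⟩ := hx
  obtain ⟨l, a', b', ha', hb', rfl⟩ := hy
  refine ⟨k + l, Fin.append a a', Fin.append b b',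
    Fin.addCases (fun i => by simpa using ha i) fun i => by simpa using ha' i,
    Fin.addCases (fun i => by simpa using hb i) fun i => by simpa using hb' i, ?_⟩
  simp [Fin.sum_univ_add]

lemma smul_mem_SEP {c : ℂ} (hc : 0 ≤ c) (hx : x ∈ SEP n d) : c • x ∈ SEP n d := by
  obtain ⟨k, a, b, ha, hb, rfl⟩ := hx
  exact ⟨k, fun i => c • a i, b, fun i => (ha i).smul hc, hb,
    by simp [Finset.smul_sum, Matrix.smul_kronecker]⟩

lemma sum_mem_SEP {κ : Type*} (s : Finset κ)
    {f : κ → Matrix (Fin n × Fin d) (Fin n × Fin d) ℂ} (hf : ∀ k ∈ s, f k ∈ SEP n d) :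
    ∑ k ∈ s, f k ∈ SEP n d :=
  Finset.sum_induction f (· ∈ SEP n d) (fun _ _ => add_mem_SEP) (zero_mem_SEP n d) hf

end Cone

section Compress

variable {ι J : Type*} [Fintype ι]

/-- The compression `(y* ⊗ 1) Z (y ⊗ 1)`. -/
def compress (y : ι → ℂ) (Z : Matrix (ι × J) (ι × J) ℂ) : Matrix J J ℂ :=
  Matrix.of fun a b => ∑ k, ∑ l, star (y k) * y l * Z (k, a) (l, b)

lemma posSemidef_compress [Finite J] (y : ι → ℂ) {Z : Matrix (ι × J) (ι × J) ℂ}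
    (hZ : Z.PosSemidef) : (compress y Z).PosSemidef := by
  classical
  have := Fintype.ofFinite J
  convert hZ.conjTranspose_mul_mul_same
    (Matrix.of fun (p : ι × J) (b : J) => if p.2 = b then y p.1 else 0) using 1
  ext a b
  simp only [compress, Matrix.of_apply, Matrix.mul_apply, Matrix.conjTranspose_apply,
    Fintype.sum_prod_type, apply_ite star, star_zero, ite_mul, mul_ite, zero_mul, mul_zero,
    Finset.sum_ite_eq', Finset.mem_univ, if_true, Finset.sum_mul]
  rw [Finset.sum_comm]
  exact Finset.sum_congr rfl fun k _ => Finset.sum_congr rfl fun l _ => by ring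

variable [DecidableEq ι]

lemma compress_single (j : ι) (Z : Matrix (ι × J) (ι × J) ℂ) (a b : J) :
    compress (Pi.single j 1) Z a b = Z (j, a) (j, b) := by
  simp [compress, Pi.single_apply]

lemma compress_single_add_smul_single (i j : ι) (c : ℂ) (Z : Matrix (ι × J) (ι × J) ℂ) (a b : J) :
    compress (Pi.single i 1 + c • Pi.single j 1) Z a b = Z (i, a) (i, b) + c * Z (i, a) (j, b) +
      star c * Z (j, a) (i, b) + star c * c * Z (j, a) (j, b) := by
  simp only [compress, Matrix.of_apply, Pi.add_apply, Pi.smul_apply, Pi.single_apply, smul_eq_mul,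
    mul_ite, mul_one, mul_zero, star_add, apply_ite star, star_one, star_zero, add_mul, mul_add,
    ite_mul, one_mul, zero_mul, Finset.sum_add_distrib, Finset.sum_ite_eq', Finset.mem_univ,
    if_true]
  ring

/-- The fourth roots of unity, whose first two moments vanish. -/
def phase : Fin 4 → ℂ := ![1, Complex.I, -1, -Complex.I]

lemma sum_phase (u₁ u₂ w₁ w₂ z₁₁ z₁₂ z₂₁ z₂₂ : ℂ) :
    ∑ k, (u₁ + phase k * u₂) * (w₁ + star (phase k) * w₂) *
      (z₁₁ - phase k * z₁₂ - star (phase k) * z₂₁ + z₂₂) =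
    4 * ((u₁ * w₁ + u₂ * w₂) * (z₁₁ + z₂₂) - u₁ * w₂ * z₁₂ - u₂ * w₁ * z₂₁) := by
  simp only [phase, Fin.sum_univ_four, Matrix.cons_val, Complex.star_def, map_one, map_neg,
    Complex.conj_I]
  ring_nf
  rw [Complex.I_sq]
  ring

/-- For `Z ≥ 0`, the unnormalized separable matrix
`4 ((E_ii + E_jj) ⊗ (Z_ii + Z_jj) - E_ij ⊗ Z_ij - E_ji ⊗ Z_ji)` attached to two block indices. -/
def pairSep (i j : ι) (Z : Matrix (ι × J) (ι × J) ℂ) : Matrix (ι × J) (ι × J) ℂ :=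
  ∑ k, vecMulVec (Pi.single i 1 + phase k • Pi.single j 1)
      (star (Pi.single i 1 + phase k • Pi.single j 1)) ⊗ₖ
    compress (Pi.single i 1 + -phase k • Pi.single j 1) Z

lemma pairSep_apply (i j : ι) (Z : Matrix (ι × J) (ι × J) ℂ) (p q : ι) (a b : J) :
    pairSep i j Z (p, a) (q, b) = 4 *
      (((if p = i then 1 else 0) * (if q = i then 1 else 0) +
        (if p = j then 1 else 0) * (if q = j then 1 else 0)) *
          (Z (i, a) (i, b) + Z (j, a) (j, b)) -
        (if p = i then 1 else 0) * (if q = j then 1 else 0) * Z (i, a) (j, b) -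
        (if p = j then 1 else 0) * (if q = i then 1 else 0) * Z (j, a) (i, b)) := by
  have hnorm (k : Fin 4) : star (phase k) * phase k = 1 := by
    fin_cases k <;> simp [phase]
  rw [← sum_phase, pairSep, Matrix.sum_apply]
  refine Finset.sum_congr rfl fun k _ => ?_
  rw [Matrix.kroneckerMap_apply, vecMulVec_apply, compress_single_add_smul_single, star_neg,
    neg_mul_neg, hnorm]
  simp only [Pi.add_apply, Pi.star_apply, Pi.smul_apply, Pi.single_apply, smul_eq_mul, star_add,
    star_mul', apply_ite star, star_one, star_zero]
  ring

lemma sum_sum_ite_eq_zero (g : ι → ι → ℂ) :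
    (∑ i, ∑ j, if i = j then 0 else g i j) = ∑ i, ∑ j, g i j - ∑ i, g i i := by
  rw [← Finset.sum_sub_distrib]
  refine Finset.sum_congr rfl fun i _ => ?_
  rw [← Finset.sum_ite_eq_of_mem Finset.univ i (g i) (Finset.mem_univ i), ← Finset.sum_sub_distrib]
  exact Finset.sum_congr rfl fun j _ => by split_ifs <;> simp

lemma reduction_eq_sum_pairSep (Z : Matrix (ι × J) (ι × J) ℂ) :
    reduction Z = ∑ i, ∑ j, if i = j then 0 else
      ((8 : ℂ)⁻¹ • pairSep i j Z + ((Fintype.card ι : ℂ) - 1) •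
        (vecMulVec (Pi.single i 1) (star (Pi.single i 1)) ⊗ₖ compress (Pi.single j 1) Z)) := by
  ext ⟨p, a⟩ ⟨q, b⟩
  have hvec (i : ι) : (vecMulVec (Pi.single i 1) (star (Pi.single i 1)) : Matrix ι ι ℂ) p q =
      (if p = i then 1 else 0) * (if q = i then 1 else 0) := by
    simp [vecMulVec_apply, Pi.single_apply]
  simp only [Matrix.sum_apply, apply_ite (fun M : Matrix (ι × J) (ι × J) ℂ => M (p, a) (q, b)),
    Matrix.zero_apply, Matrix.add_apply, Matrix.smul_apply, Matrix.kroneckerMap_apply,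
    compress_single, hvec, pairSep_apply, smul_eq_mul]
  rw [sum_sum_ite_eq_zero]
  simp only [reduction, Matrix.of_apply, mul_ite, ite_mul, mul_one, one_mul, mul_zero, zero_mul,
    mul_add, mul_sub, add_mul, Finset.sum_add_distrib, Finset.sum_sub_distrib, Finset.sum_ite_eq,
    Finset.mem_univ, if_true, Finset.sum_ite_irrel, Finset.sum_const_zero]
  obtain rfl | hpq := eq_or_ne p q
  · simp [← Finset.mul_sum]
    ring
  · simp [hpq]
    ring

end Compress

lemma reduction_mem_SEP {n d : ℕ} {Z : Matrix (Fin n × Fin d) (Fin n × Fin d) ℂ}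
    (hZ : Z.PosSemidef) : reduction Z ∈ SEP n d := by
  have hprod (v : Fin n → ℂ) (w : Fin n → ℂ) : vecMulVec v (star v) ⊗ₖ compress w Z ∈ SEP n d :=
    kronecker_mem_SEP (Matrix.posSemidef_vecMulVec_self_star v) (posSemidef_compress w hZ)
  rw [reduction_eq_sum_pairSep]
  refine sum_mem_SEP _ fun i _ => sum_mem_SEP _ fun j _ => ?_
  split_ifs with hij
  · exact zero_mem_SEP n d
  · have hcard : (0 : ℂ) ≤ Fintype.card (Fin n) - 1 :=
      sub_nonneg.2 (mod_cast Fintype.card_pos_iff.2 ⟨i⟩)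
    exact add_mem_SEP (smul_mem_SEP (by simp) (sum_mem_SEP _ fun k _ => hprod _ _))
      (smul_mem_SEP hcard (hprod _ _))

lemma reduction_reduction_sub {ι J : Type*} [Fintype ι] [DecidableEq ι]
    (x : Matrix (ι × J) (ι × J) ℂ) :
    reduction (reduction x - ((Fintype.card ι : ℂ) ^ 2 - 2) • x) =
      ((Fintype.card ι : ℂ) ^ 2 - 1) • x := by
  ext ⟨p, a⟩ ⟨q, b⟩
  simp only [reduction, Matrix.of_apply, Matrix.sub_apply, Matrix.smul_apply, smul_eq_mul, if_true,
    Finset.sum_sub_distrib, ← Finset.mul_sum, Finset.sum_const, Finset.card_univ, nsmul_eq_mul]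
  split_ifs <;> ring

lemma mem_SEP_of_posSemidef_reduction_sub_smul {n d : ℕ} (hn : 2 ≤ n)
    {x : Matrix (Fin n × Fin d) (Fin n × Fin d) ℂ}
    (h : (reduction x - ((n : ℂ) ^ 2 - 2) • x).PosSemidef) : x ∈ SEP n d := by
  have hpos : (0 : ℂ) < (n : ℂ) ^ 2 - 1 := sub_pos.2 (mod_cast Nat.one_lt_pow two_ne_zero hn)
  have hmem := reduction_mem_SEP h
  have hinv := reduction_reduction_sub x
  rw [Fintype.card_fin] at hinv
  rw [hinv] at hmem
  simpa only [inv_smul_smul₀ hpos.ne'] using smul_mem_SEP (inv_nonneg.2 hpos.le) hmem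

end Separability

section Restriction

open scoped Matrix.Norms.L2Operator

instance borelSpaceMatrix (m n : Type*) [Countable m] [Countable n] : BorelSpace (Matrix m n ℂ) :=
  inferInstanceAs (BorelSpace (m → n → ℂ))

open scoped MatrixOrder in
lemma isClosed_setOf_posSemidef {I : Type*} [Finite I] :
    IsClosed {x : Matrix I I ℂ | x.PosSemidef} := by
  classical
  let _ := Fintype.ofFinite I
  let _ : CStarAlgebra (Matrix I I ℂ) := {}
  simpa only [Matrix.nonneg_iff_posSemidef] using CStarAlgebra.isClosed_nonneg (A := Matrix I I ℂ)

variable {I : Type*} [Fintype I] [DecidableEq I] {a r m₁ m₂ s : ℝ} {U x : Matrix I I ℂ}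

lemma measurableSet_setOf_spectralBounds :
    MeasurableSet {x : Matrix I I ℂ | SpectralBounds a r m₁ m₂ s x} := by
  have heq : {x : Matrix I I ℂ | SpectralBounds a r m₁ m₂ s x} =
      {x | x.IsHermitian} ∩ {x | ‖x‖ ≤ r} ∩
      (fun x => x - (a : ℂ) • (1 : Matrix I I ℂ)) ⁻¹' {x | x.PosSemidef} ∩
      {x | m₁ ≤ (ntr x).re} ∩ {x | (ntr x).re ≤ m₂} ∩
      {x | (ntr ((x - ntr x • 1) * (x - ntr x • 1))).re ≤ s} :=
    Set.ext fun x => ⟨fun h => ⟨⟨⟨⟨⟨h.1, h.2⟩, h.3⟩, h.4⟩, h.5⟩, h.6⟩,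
      fun ⟨⟨⟨⟨⟨h₁, h₂⟩, h₃⟩, h₄⟩, h₅⟩, h₆⟩ => ⟨h₁, h₂, h₃, h₄, h₅, h₆⟩⟩
  have hntr : Continuous (ntr : Matrix I I ℂ → ℂ) := by unfold ntr; fun_prop
  rw [heq]
  refine IsClosed.measurableSet ((((((isClosed_eq (by fun_prop) continuous_id).inter
    (isClosed_le continuous_norm continuous_const)).inter
    (isClosed_setOf_posSemidef.preimage (by fun_prop))).inter
    (isClosed_le continuous_const ?_)).inter (isClosed_le ?_ continuous_const)).inter
    (isClosed_le ?_ continuous_const)) <;> fun_prop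

lemma ntr_conj (hU : U ∈ unitary (Matrix I I ℂ)) (x : Matrix I I ℂ) :
    ntr (U * x * star U) = ntr x := by
  rw [ntr, ntr, Matrix.trace_mul_comm, ← mul_assoc, Unitary.star_mul_self_of_mem hU, one_mul]

lemma conj_sub_smul_one (hU : U ∈ unitary (Matrix I I ℂ)) (x : Matrix I I ℂ) (c : ℂ) :
    U * x * star U - c • 1 = U * (x - c • 1) * star U := by
  rw [mul_sub, sub_mul, mul_smul_comm, smul_mul_assoc, mul_one, Unitary.mul_star_self_of_mem hU]

lemma SpectralBounds.conj (h : SpectralBounds a r m₁ m₂ s x) (hU : U ∈ unitary (Matrix I I ℂ)) :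
    SpectralBounds a r m₁ m₂ s (U * x * star U) where
  herm := Matrix.isHermitian_mul_mul_conjTranspose U h.herm
  bdd := by
    rw [CStarRing.norm_mul_mem_unitary _ (Unitary.star_mem hU), CStarRing.norm_mem_unitary_mul _ hU]
    exact h.bdd
  low := by
    rw [conj_sub_smul_one hU]
    exact h.low.mul_mul_conjTranspose_same U
  mean_ge := by rw [ntr_conj hU]; exact h.mean_ge
  mean_le := by rw [ntr_conj hU]; exact h.mean_le
  var_le := by
    have hsq : ∀ y, U * y * star U * (U * y * star U) = U * (y * y) * star U := fun y => by
      rw [show U * y * star U * (U * y * star U) = U * y * (star U * U) * y * star U by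
        simp only [mul_assoc], Unitary.star_mul_self_of_mem hU, mul_one, mul_assoc U y y]
    rw [ntr_conj hU, conj_sub_smul_one hU, hsq, ntr_conj hU]
    exact h.var_le

lemma spectralBounds_conj_iff (hU : U ∈ unitary (Matrix I I ℂ)) :
    SpectralBounds a r m₁ m₂ s (U * x * star U) ↔ SpectralBounds a r m₁ m₂ s x := by
  refine ⟨fun h => ?_, fun h => h.conj hU⟩
  have hinv : star U * (U * x * star U) * star (star U) = x := by
    rw [star_star, show star U * (U * x * star U) * U = (star U * U) * x * (star U * U) by
      simp only [mul_assoc], Unitary.star_mul_self_of_mem hU, one_mul, mul_one]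
  exact hinv ▸ h.conj (Unitary.star_mem hU)

lemma invMeasure_restrict_spectralBounds {ρ : Measure (Matrix I I ℂ)}
    (hρ : ∀ U ∈ unitary (Matrix I I ℂ), ρ.map (fun x => U * x * star U) = ρ) :
    InvMeasure (ρ.restrict {x | SpectralBounds a r m₁ m₂ s x}) r where
  herm := (ae_restrict_mem measurableSet_setOf_spectralBounds).mono fun _ hx => hx.herm
  bdd := (ae_restrict_mem measurableSet_setOf_spectralBounds).mono fun _ hx => hx.bdd
  inv := fun U hU => by
    have hmap := Measure.restrict_map (μ := ρ) (f := fun x : Matrix I I ℂ => U * x * star U)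
      (Continuous.measurable (by fun_prop)) measurableSet_setOf_spectralBounds
      (s := {x | SpectralBounds a r m₁ m₂ s x})
    simp only [hρ U hU, Set.preimage_ofPred_eq, spectralBounds_conj_iff hU] at hmap
    exact hmap.symm

end Restriction

section AlmostSureBound

open scoped Matrix.Norms.L2Operator

section Law

variable {ι J : Type*} [Fintype ι] [DecidableEq ι]

lemma continuous_reduction :
    Continuous (reduction : Matrix (ι × J) (ι × J) ℂ → Matrix (ι × J) (ι × J) ℂ) := by
  refine continuous_matrix fun p q => ?_
  simp only [reduction, Matrix.of_apply]
  split_ifs <;> fun_prop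

variable [DecidableEq J]

lemma measurableSet_setOf_posSemidef_reduction [Finite J] (c : ℝ) :
    MeasurableSet {x : Matrix (ι × J) (ι × J) ℂ | (reduction x - (c : ℂ) • 1).PosSemidef} :=
  (isClosed_setOf_posSemidef.preimage (continuous_reduction.sub continuous_const)).measurableSet

lemma measureReal_spectralBounds_and_not_posSemidef_le {Ω : Type*} [MeasurableSpace Ω]
    (ℙ : Measure Ω) [IsProbabilityMeasure ℙ] [Nonempty ι] [Fintype J] [Nonempty J]
    {Y : Ω → Matrix (ι × J) (ι × J) ℂ} (hY : Measurable Y)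
    (hU : ∀ U ∈ unitary (Matrix (ι × J) (ι × J) ℂ),
      ℙ.map (fun ω => U * Y ω * star U) = ℙ.map Y)
    {a r m₁ m₂ s t δ K : ℝ} (ht : 0 < t) (hs : 0 ≤ s) (ha : a ≤ m₂)
    (hw : 0 ≤ m₂ - a + t - t⁻¹ * s) (hδ : 0 < δ) {q : ℕ}
    (hK : ((Fintype.card ι : ℝ) ^ 2 + 1) * Fintype.card ι * r + 1 ≤ K)
    (hKz : redEdge (Fintype.card ι) a m₁ m₂ s t ≤ K)
    (hq : redErrConst (Fintype.card ι) r (m₂ - a) s t * energyConst (Fintype.card ι) r * q ^ 2 *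
      Fintype.card ι ≤ δ * Fintype.card J) :
    δ * (K - redEdge (Fintype.card ι) a m₁ m₂ s t + δ + δ) ^ (2 * q) *
      ℙ.real {ω | SpectralBounds a r m₁ m₂ s (Y ω) ∧ ¬ (reduction (Y ω) -
        ((redEdge (Fintype.card ι) a m₁ m₂ s t - 2 * δ : ℝ) : ℂ) • 1).PosSemidef} ≤
      Fintype.card (ι × J) * (K - redEdge (Fintype.card ι) a m₁ m₂ s t + δ) ^ (2 * q + 1) := by
  have : IsProbabilityMeasure (ℙ.map Y) := Measure.isProbabilityMeasure_map hY.aemeasurable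
  have hinv : ∀ U ∈ unitary (Matrix (ι × J) (ι × J) ℂ),
      (ℙ.map Y).map (fun x => U * x * star U) = ℙ.map Y := fun U hU' => by
    rw [Measure.map_map (Continuous.measurable (by fun_prop)) hY]
    exact hU U hU'
  have hbound := (invMeasure_restrict_spectralBounds hinv).measureReal_not_posSemidef_le
    (measureReal_restrict_apply_univ (μ := ℙ.map Y) _ ▸ measureReal_le_one)
    (ae_restrict_mem measurableSet_setOf_spectralBounds) (m₁ := m₁) ht hs ha hw hδ hK hKz hq
  have hbad := (measurableSet_setOf_posSemidef_reduction (ι := ι) (J := J)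
    (redEdge (Fintype.card ι) a m₁ m₂ s t - 2 * δ)).compl
  rwa [← Set.compl_ofPred, measureReal_restrict_apply hbad,
    map_measureReal_apply hY (hbad.inter measurableSet_setOf_spectralBounds), Set.inter_comm]
    at hbound

end Law

section Scalar

lemma exists_pow_two_mul_log_le {ρ : ℝ} (hρ₀ : 0 ≤ ρ) (hρ₁ : ρ < 1) :
    ∃ C : ℕ, ∀ d : ℕ, 0 < d → ρ ^ (2 * (C * Nat.log 2 d)) ≤ 8 / (d : ℝ) ^ 3 := by
  obtain ⟨C, hC⟩ := exists_pow_lt_of_lt_one (show (0 : ℝ) < 8⁻¹ by norm_num) hρ₁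
  refine ⟨C, fun d hd => ?_⟩
  have hC₂ : ρ ^ (2 * C) ≤ 8⁻¹ := (pow_le_pow_of_le_one hρ₀ hρ₁.le (by lia)).trans hC.le
  have hlog : (d : ℝ) ≤ 2 ^ (Nat.log 2 d + 1) := by
    exact_mod_cast (Nat.lt_pow_succ_log_self (by norm_num) d).le
  have hcube : (d : ℝ) ^ 3 ≤ 8 * 8 ^ Nat.log 2 d := by
    calc (d : ℝ) ^ 3 ≤ (2 ^ (Nat.log 2 d + 1)) ^ 3 := by gcongr
      _ = (2 ^ 3) ^ (Nat.log 2 d + 1) := by rw [← pow_mul, ← pow_mul, mul_comm]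
      _ = 8 * 8 ^ Nat.log 2 d := by rw [pow_succ']; norm_num
  calc ρ ^ (2 * (C * Nat.log 2 d)) = (ρ ^ (2 * C)) ^ Nat.log 2 d := by rw [← mul_assoc, pow_mul]
    _ ≤ 8⁻¹ ^ Nat.log 2 d := by gcongr
    _ = 1 / 8 ^ Nat.log 2 d := by rw [inv_pow, one_div]
    _ ≤ 8 / (d : ℝ) ^ 3 := by
      rw [div_le_div_iff₀ (by positivity) (by positivity), one_mul]
      exact hcube

lemma eventually_mul_log_sq_le (c : ℝ) {δ : ℝ} (hδ : 0 < δ) :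
    ∀ᶠ d : ℕ in atTop, c * (Nat.log 2 d : ℝ) ^ 2 ≤ δ * d := by
  have hlittle := ((Real.isLittleO_pow_log_id_atTop (n := 2)).comp_tendsto
    tendsto_natCast_atTop_atTop).const_mul_left (c * (Real.log 2 ^ 2)⁻¹)
  filter_upwards [hlittle.bound hδ] with d hd
  calc c * (Nat.log 2 d : ℝ) ^ 2 ≤ |c| * Real.logb 2 d ^ 2 := by
        gcongr
        · exact le_abs_self c
        · exact_mod_cast Real.natLog_le_logb d 2
    _ = ‖c * (Real.log 2 ^ 2)⁻¹ * Real.log d ^ 2‖ := by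
        rw [norm_mul, norm_mul, norm_inv, norm_pow, norm_pow, Real.norm_eq_abs, Real.norm_eq_abs,
          Real.norm_eq_abs, sq_abs, sq_abs, Real.logb, div_pow, div_eq_inv_mul, mul_assoc]
    _ ≤ δ * d := by simpa only [Function.comp_apply, id, Real.norm_natCast] using hd

lemma le_mul_of_mul_pow_le {N v δ p b : ℝ} {k : ℕ} (hN : 0 ≤ N) (hv : 0 < v) (hδ : 0 < δ)
    (hp : δ * (v + δ) ^ k * p ≤ N * v ^ (k + 1)) (hb : (v / (v + δ)) ^ k ≤ b) :
    p ≤ N * v / δ * b := by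
  calc p ≤ N * v ^ (k + 1) / (δ * (v + δ) ^ k) := by
        rw [le_div_iff₀ (by positivity), mul_comm]
        exact hp
    _ = N * v / δ * (v / (v + δ)) ^ k := by rw [div_pow, pow_succ]; field_simp
    _ ≤ N * v / δ * b := by gcongr

end Scalar

lemma ae_eventually_notMem_of_measureReal_le {Ω : Type*} [MeasurableSpace Ω] {ℙ : Measure Ω}
    [IsFiniteMeasure ℙ] {E : ℕ → Set Ω} {c : ℝ}
    (h : ∀ᶠ d : ℕ in atTop, ℙ.real (E d) ≤ c * (1 / (d : ℝ) ^ 2)) :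
    ∀ᵐ ω ∂ℙ, ∀ᶠ d in atTop, ω ∉ E d := by
  have hsum : Summable fun d => ℙ.real (E d) :=
    Summable.of_norm_bounded_eventually_nat
      ((Real.summable_one_div_nat_pow.mpr one_lt_two).mul_left c)
      (h.mono fun d hd => by rwa [Real.norm_of_nonneg measureReal_nonneg])
  refine ae_eventually_notMem ((tsum_congr fun d => ?_).trans_ne hsum.tsum_ofReal_ne_top)
  exact (ofReal_measureReal (measure_ne_top ℙ (E d))).symm

variable {Ω : Type*} [MeasurableSpace Ω] {ℙ : Measure Ω} [IsProbabilityMeasure ℙ] {n : ℕ}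
  {X : (d : ℕ) → Ω → Matrix (Fin n × Fin d) (Fin n × Fin d) ℂ}

-- The moment exponent `q` grows like `log d`: fast enough for the tail bound to be `O(d⁻²)`, slowly
-- enough for the error term `q ^ 2 / d` to vanish.
lemma UnitInv.ae_eventually_posSemidef_reduction (hU : UnitInv ℙ n X) (hn : 0 < n)
    (hX : ∀ d, Measurable (X d)) {a r m₁ m₂ s t δ : ℝ} (ht : 0 < t) (hs : 0 ≤ s) (ha : a ≤ m₂)
    (hw : 0 ≤ m₂ - a + t - t⁻¹ * s) (hδ : 0 < δ) :
    ∀ᵐ ω ∂ℙ, ∀ᶠ d in atTop, SpectralBounds a r m₁ m₂ s (X d ω) →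
      (reduction (X d ω) - ((redEdge n a m₁ m₂ s t - 2 * δ : ℝ) : ℂ) • 1).PosSemidef := by
  have : NeZero n := ⟨hn.ne'⟩
  set z := redEdge n a m₁ m₂ s t with hz
  set K := max (((n : ℝ) ^ 2 + 1) * n * r + 1) z
  set v := K - z + δ with hv
  have hv₀ : 0 < v := by linarith [le_max_right (((n : ℝ) ^ 2 + 1) * n * r + 1) z]
  obtain ⟨C, hC⟩ := exists_pow_two_mul_log_le (ρ := v / (v + δ)) (by positivity)
    ((div_lt_one (by positivity)).2 (by linarith))
  suffices hbound : ∀ᶠ d : ℕ in atTop, ℙ.real {ω | SpectralBounds a r m₁ m₂ s (X d ω) ∧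
      ¬ (reduction (X d ω) - ((z - 2 * δ : ℝ) : ℂ) • 1).PosSemidef} ≤
      8 * n * v / δ * (1 / (d : ℝ) ^ 2) by
    filter_upwards [ae_eventually_notMem_of_measureReal_le hbound] with ω hω
    exact hω.mono fun d hd hgood => not_not.1 fun hbad => hd ⟨hgood, hbad⟩
  filter_upwards [eventually_gt_atTop 0, eventually_mul_log_sq_le
    (redErrConst n r (m₂ - a) s t * energyConst n r * C ^ 2 * n) hδ] with d hd hq
  have : NeZero d := ⟨hd.ne'⟩
  have htail := measureReal_spectralBounds_and_not_posSemidef_le ℙ (hX d) (hU d) (r := r)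
    (m₁ := m₁) (K := K) (q := C * Nat.log 2 d) ht hs ha hw hδ
  simp only [Fintype.card_prod, Fintype.card_fin, ← hz, ← hv, Nat.cast_mul] at htail
  specialize htail (le_max_left _ _) (le_max_right _ _) (by rw [mul_pow]; linarith)
  calc _ ≤ n * d * v / δ * (8 / (d : ℝ) ^ 3) :=
        le_mul_of_mul_pow_le (by positivity) hv₀ hδ htail (hC d hd)
    _ = 8 * n * v / δ * (1 / (d : ℝ) ^ 2) := by field_simp

end AlmostSureBound

section StrongLimit

open scoped Matrix.Norms.L2Operator

section Support

variable {μ : Measure ℝ} {A B : ℝ}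

lemma msupport_eq_support (μ : Measure ℝ) : msupport μ = μ.support := by
  simp only [msupport, Measure.support_eq_forall_isOpen, imp.swap]

lemma ae_mem_Icc_of_msupport_subset (h : msupport μ ⊆ Set.Icc A B) : ∀ᵐ x ∂μ, x ∈ Set.Icc A B :=
  Filter.mem_of_superset Measure.support_mem_ae (msupport_eq_support μ ▸ h)

lemma integral_mem_Icc_of_msupport_subset [IsProbabilityMeasure μ]
    (h : msupport μ ⊆ Set.Icc A B) : ∫ x, x ∂μ ∈ Set.Icc A B :=
  have hae := ae_mem_Icc_of_msupport_subset h
  (convex_Icc A B).integral_mem isClosed_Icc hae (Integrable.of_mem_Icc A B aemeasurable_id hae)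

end Support

section Matrices

variable {I : Type*} [Fintype I] [DecidableEq I] {x : Matrix I I ℂ}

lemma polyApply_X (x : Matrix I I ℂ) : polyApply X x = x := by
  simp [polyApply]

lemma polyApply_X_sq (x : Matrix I I ℂ) : polyApply (X ^ 2) x = x * x := by
  simp [polyApply, sq]

lemma polyApply_C_sub_X (b : ℝ) (x : Matrix I I ℂ) :
    polyApply (C b - X) x = (b : ℂ) • 1 - x := by
  simp [polyApply, Algebra.algebraMap_eq_smul_one]

lemma ntr_centered_sq [Nonempty I] (x : Matrix I I ℂ) :
    ntr ((x - ntr x • 1) * (x - ntr x • 1)) = ntr (x * x) - ntr x ^ 2 := by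
  have hcard : (Fintype.card I : ℂ) ≠ 0 := Nat.cast_ne_zero.2 Fintype.card_ne_zero
  have htrace : x.trace = Fintype.card I * ntr x := by rw [ntr, mul_inv_cancel_left₀ hcard]
  rw [ntr, sub_mul, mul_sub, mul_sub]
  simp only [smul_mul_assoc, mul_smul_comm, one_mul, mul_one, Matrix.trace_sub, Matrix.trace_smul,
    Matrix.trace_one, htrace, smul_eq_mul]
  rw [ntr.eq_def (x * x)]
  field_simp
  ring

lemma spectralBounds_of_norm_le [Nonempty I] (hx : x.IsHermitian) {a b r m₁ m₂ s : ℝ}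
    (hr : ‖x‖ ≤ r) (hb : ‖(b : ℂ) • 1 - x‖ ≤ b - a) (hm₁ : m₁ ≤ (ntr x).re)
    (hm₂ : (ntr x).re ≤ m₂) (hs : (ntr (x * x) - ntr x ^ 2).re ≤ s) :
    SpectralBounds a r m₁ m₂ s x where
  herm := hx
  bdd := hr
  low := by
    have hpsd := posSemidef_smul_one_sub_of_norm_le
      ((Matrix.isHermitian_one.smul (Complex.conj_ofReal b)).sub hx) hb
    rwa [Complex.ofReal_sub, sub_smul, sub_sub_sub_cancel_left] at hpsd
  mean_ge := hm₁
  mean_le := hm₂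
  var_le := by rwa [ntr_centered_sq]

end Matrices

section Convergence

variable {Ω : Type*} [MeasurableSpace Ω] {ℙ : Measure Ω} {n : ℕ}
  {X : (d : ℕ) → Ω → Matrix (Fin n × Fin d) (Fin n × Fin d) ℂ} {μ : Measure ℝ}

namespace StrongConv

lemma ae_tendsto_ntr (h : StrongConv ℙ n X μ) : ∀ᵐ ω ∂ℙ,
    Tendsto (fun d => ntr (X d ω)) atTop (𝓝 (∫ x, x ∂μ : ℝ)) ∧
    Tendsto (fun d => ntr (X d ω * X d ω)) atTop (𝓝 (∫ x, x ^ 2 ∂μ : ℝ)) := by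
  filter_upwards [h] with ω hω
  have hmean := (hω Polynomial.X).1
  have hsq := (hω (Polynomial.X ^ 2)).1
  simp only [polyApply_X, polyApply_X_sq, eval_X, eval_pow] at hmean hsq
  simpa only [ntr, Fintype.card_prod, Fintype.card_fin, Nat.cast_mul] using ⟨hmean, hsq⟩

lemma ae_tendsto_norm (h : StrongConv ℙ n X μ) (b : ℝ) : ∀ᵐ ω ∂ℙ,
    Tendsto (fun d => ‖X d ω‖) atTop (𝓝 (sSup ((fun x => |x|) '' msupport μ))) ∧
    Tendsto (fun d => ‖(b : ℂ) • 1 - X d ω‖) atTop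
      (𝓝 (sSup ((fun x => |b - x|) '' msupport μ))) := by
  filter_upwards [h] with ω hω
  have hnorm := (hω Polynomial.X).2
  have hsub := (hω (Polynomial.C b - Polynomial.X)).2
  simp only [polyApply_X, polyApply_C_sub_X, eval_X, eval_sub, eval_C] at hnorm hsub
  exact ⟨hnorm, hsub⟩

lemma ae_eventually_norm_le (h : StrongConv ℙ n X μ) {A B ε : ℝ} (hA : -B ≤ A) (hAB : A ≤ B)
    (hsupp : msupport μ ⊆ Set.Icc A B) (hε : 0 < ε) :
    ∀ᵐ ω ∂ℙ, ∀ᶠ d in atTop, ‖X d ω‖ ≤ B + ε ∧ ‖(B : ℂ) • 1 - X d ω‖ ≤ B - (A - ε) := by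
  have hB : sSup ((fun x : ℝ => |x|) '' msupport μ) ≤ B :=
    Real.sSup_le (Set.forall_mem_image.2 fun x hx =>
      abs_le.2 ⟨hA.trans (hsupp hx).1, (hsupp hx).2⟩) (by linarith)
  have hBA : sSup ((fun x : ℝ => |B - x|) '' msupport μ) ≤ B - A :=
    Real.sSup_le (Set.forall_mem_image.2 fun x hx => by
      rw [abs_of_nonneg (sub_nonneg.2 (hsupp hx).2)]
      exact sub_le_sub_left (hsupp hx).1 B) (sub_nonneg.2 hAB)
  filter_upwards [h.ae_tendsto_norm B] with ω hω
  filter_upwards [hω.1.eventually_le_const (show _ < B + ε by linarith),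
    hω.2.eventually_le_const (show _ < B - (A - ε) by linarith)] with d hd₁ hd₂ using ⟨hd₁, hd₂⟩

lemma ae_eventually_moments (h : StrongConv ℙ n X μ) {ε s : ℝ} (hε : 0 < ε)
    (hs : (∫ x, x ^ 2 ∂μ) - (∫ x, x ∂μ) ^ 2 < s) :
    ∀ᵐ ω ∂ℙ, ∀ᶠ d in atTop, (∫ x, x ∂μ) - ε ≤ (ntr (X d ω)).re ∧
      (ntr (X d ω)).re ≤ (∫ x, x ∂μ) + ε ∧ (ntr (X d ω * X d ω) - ntr (X d ω) ^ 2).re ≤ s := by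
  filter_upwards [h.ae_tendsto_ntr] with ω hω
  have hmean := (Complex.continuous_re.tendsto _).comp hω.1
  have hvar := (Complex.continuous_re.tendsto _).comp (hω.2.sub (hω.1.pow 2))
  rw [Complex.ofReal_re] at hmean
  rw [← Complex.ofReal_pow, ← Complex.ofReal_sub, Complex.ofReal_re] at hvar
  filter_upwards [hmean.eventually_const_le (sub_lt_self _ hε),
    hmean.eventually_le_const (lt_add_of_pos_right _ hε), hvar.eventually_le_const hs]
    with d hd₁ hd₂ hd₃ using ⟨hd₁, hd₂, hd₃⟩

lemma ae_eventually_spectralBounds (h : StrongConv ℙ n X μ) (hn : 0 < n)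
    (hX : ∀ d ω, (X d ω).IsHermitian) {A B ε s : ℝ} (hA : -B ≤ A) (hAB : A ≤ B)
    (hsupp : msupport μ ⊆ Set.Icc A B) (hε : 0 < ε)
    (hs : (∫ x, x ^ 2 ∂μ) - (∫ x, x ∂μ) ^ 2 < s) :
    ∀ᵐ ω ∂ℙ, ∀ᶠ d in atTop, SpectralBounds (A - ε) (B + ε) ((∫ x, x ∂μ) - ε)
      ((∫ x, x ∂μ) + ε) s (X d ω) := by
  have : NeZero n := ⟨hn.ne'⟩
  filter_upwards [h.ae_eventually_norm_le hA hAB hsupp hε, h.ae_eventually_moments hε hs]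
    with ω hnorm hmom
  filter_upwards [hnorm, hmom, eventually_gt_atTop 0] with d hd₁ hd₂ hd
  have : NeZero d := ⟨hd.ne'⟩
  exact spectralBounds_of_norm_le (hX d ω) hd₁.1 hd₁.2 hd₂.1 hd₂.2.1 hd₂.2.2

end StrongConv

lemma tendsto_measure_of_ae_eventually {Ω : Type*} [MeasurableSpace Ω] {ℙ : Measure Ω}
    [IsProbabilityMeasure ℙ] {E : ℕ → Set Ω} (h : ∀ᵐ ω ∂ℙ, ∀ᶠ d in atTop, ω ∈ E d) :
    Tendsto (fun d => ℙ (E d)) atTop (𝓝 1) := by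
  have hmono : Monotone fun D : ℕ => ⋂ d ≥ D, E d := fun a b hab =>
    Set.biInter_subset_biInter_left fun d hd => le_trans hab hd
  have hfull : ℙ (⋃ D : ℕ, ⋂ d ≥ D, E d) = 1 := by
    rw [← measure_univ (μ := ℙ)]
    refine measure_congr (eventuallyEq_univ.mpr ?_)
    filter_upwards [h] with ω hω
    obtain ⟨D, hD⟩ := eventually_atTop.mp hω
    exact Set.mem_iUnion.mpr ⟨D, Set.mem_iInter₂.mpr hD⟩
  exact tendsto_of_tendsto_of_tendsto_of_le_of_le (hfull ▸ tendsto_measure_iUnion_atTop hmono)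
    tendsto_const_nhds (fun d => measure_mono (Set.biInter_subset_of_mem (le_refl d)))
    fun d => prob_le_one

end Convergence

end StrongLimit

section Threshold

open scoped Matrix.Norms.L2Operator

lemma mem_SEP_of_posSemidef_reduction_sub_smul_one {n d : ℕ} (hn : 2 ≤ n)
    {x : Matrix (Fin n × Fin d) (Fin n × Fin d) ℂ} {r c : ℝ} (hx : x.IsHermitian) (hr : ‖x‖ ≤ r)
    (hc : ((n : ℝ) ^ 2 - 2) * r ≤ c)
    (hred : (reduction x - (c : ℂ) • (1 : Matrix (Fin n × Fin d) (Fin n × Fin d) ℂ)).PosSemidef) :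
    x ∈ SEP n d := by
  have hn' : (2 : ℝ) ≤ n := mod_cast hn
  have hscaled := (posSemidef_smul_one_sub_of_norm_le hx hr).smul
    (Complex.zero_le_real.mpr (show (0 : ℝ) ≤ (n : ℝ) ^ 2 - 2 by nlinarith))
  have hgap := (Matrix.PosSemidef.one (n := Fin n × Fin d) (R := ℂ)).smul
    (Complex.zero_le_real.mpr (sub_nonneg.mpr hc))
  refine mem_SEP_of_posSemidef_reduction_sub_smul hn ?_
  convert (hred.add hscaled).add hgap using 1
  push_cast
  module

-- The witness `t = (σ + ε) * √(k ^ 2 - 2)` maximizes `redEdge` for `s = (σ + ε) ^ 2`; this is where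
-- the term `2 * σ * √(n ^ 2 - 2)` of the threshold comes from.
lemma exists_redEdge_bound {k A B m σ : ℝ} (hk : 2 ≤ k) (hσ : 0 ≤ σ) (hm : A ≤ m)
    (hcond : (k ^ 2 - 2) * (B - m) + 2 * σ * √(k ^ 2 - 2) < A) :
    ∃ ε > 0, ∃ t > 0, 0 ≤ m + ε - (A - ε) + t - t⁻¹ * (σ + ε) ^ 2 ∧
      (k ^ 2 - 2) * (B + ε) ≤ redEdge k (A - ε) (m - ε) (m + ε) ((σ + ε) ^ 2) t - 2 * ε := by
  set w := √(k ^ 2 - 2)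
  have hw2 : k ^ 2 - 2 = w ^ 2 := (Real.sq_sqrt (by nlinarith)).symm
  have hw1 : 1 ≤ w := Real.one_le_sqrt.mpr (by nlinarith)
  rw [hw2] at hcond ⊢
  obtain ⟨ε, hε, hgap⟩ : ∃ ε > 0, ε * (2 * w ^ 2 + 2 * w + 5) =
      A - (w ^ 2 * (B - m) + 2 * σ * w) :=
    ⟨_, div_pos (sub_pos.2 hcond) (by positivity), div_mul_cancel₀ _ (by positivity)⟩
  have hst : ((σ + ε) * w)⁻¹ * (σ + ε) ^ 2 = (σ + ε) / w := by field_simp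
  have hle : (σ + ε) / w ≤ (σ + ε) * w := by
    rw [div_eq_mul_inv]
    gcongr
    exact (inv_le_one_of_one_le₀ hw1).trans hw1
  refine ⟨ε, hε, (σ + ε) * w, by positivity, by rw [hst]; linarith, ?_⟩
  have hw : w ^ 2 * ((σ + ε) / w) = (σ + ε) * w := by field_simp
  rw [redEdge, hst, hw2, hw, show k ^ 2 - 1 = w ^ 2 + 1 by linarith]
  linarith

end Threshold

theorem stmt2_general
    {Ω : Type*} [MeasurableSpace Ω] (ℙ : Measure Ω) [IsProbabilityMeasure ℙ]
    (n : ℕ) (hn : 2 ≤ n)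
    (X : (d : ℕ) → Ω → Matrix (Fin n × Fin d) (Fin n × Fin d) ℂ)
    (hmeas : ∀ d, Measurable (X d))
    (hherm : ∀ d ω, (X d ω).IsHermitian)
    (hUI : UnitInv ℙ n X)
    (μ : Measure ℝ) [IsProbabilityMeasure μ]
    (A B m σ : ℝ) (hσ : 0 ≤ σ)
    (hsupp : msupport μ ⊆ Set.Icc A B)
    (hmean : (∫ x, x ∂μ) = m)
    (hvar : (∫ x, x ^ 2 ∂μ) - m ^ 2 = σ ^ 2)
    (hconv : StrongConv ℙ n X μ)
    (hcond : A > ((n : ℝ) ^ 2 - 2) * (B - m) + 2 * σ * Real.sqrt ((n : ℝ) ^ 2 - 2)) :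
    (∀ᵐ ω ∂ℙ, ∀ᶠ d : ℕ in atTop, X d ω ∈ SEP n d) ∧
      Tendsto (fun d : ℕ => ℙ {ω | X d ω ∈ SEP n d}) atTop (𝓝 1) := by
  suffices h : ∀ᵐ ω ∂ℙ, ∀ᶠ d : ℕ in atTop, X d ω ∈ SEP n d from
    ⟨h, tendsto_measure_of_ae_eventually h⟩
  subst hmean
  obtain ⟨hAm, hmB⟩ := integral_mem_Icc_of_msupport_subset hsupp
  have hn' : (2 : ℝ) ≤ n := mod_cast hn
  have hk : 0 ≤ (n : ℝ) ^ 2 - 2 := by nlinarith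
  have hA : 0 ≤ A := by
    linarith [mul_nonneg hk (sub_nonneg.2 hmB),
      mul_nonneg hσ (Real.sqrt_nonneg ((n : ℝ) ^ 2 - 2))]
  obtain ⟨ε, hε, t, ht, hw, hedge⟩ := exists_redEdge_bound hn' hσ hAm hcond
  have hbounds := hconv.ae_eventually_spectralBounds (by lia) hherm (by linarith)
    (hAm.trans hmB) hsupp hε (s := (σ + ε) ^ 2) (hvar ▸ by gcongr; linarith)
  have hred := hUI.ae_eventually_posSemidef_reduction (r := B + ε)
    (m₁ := (∫ x, x ∂μ) - ε) (by lia) hmeas ht (sq_nonneg (σ + ε)) (by linarith) hw hε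
  filter_upwards [hbounds, hred] with ω hω₁ hω₂
  filter_upwards [hω₁, hω₂] with d hd₁ hd₂
  exact mem_SEP_of_posSemidef_reduction_sub_smul_one hn hd₁.herm hd₁.bdd hedge (hd₂ hd₁)

/-- If `A > (n²−2)(B−m) + 2σ√(n²−2)`, a unitarily invariant
strongly convergent sequence of random PSD matrices is asymptotically separable. -/
theorem stmt2
    {Ω : Type*} [MeasurableSpace Ω] (ℙ : Measure Ω) [IsProbabilityMeasure ℙ]
    (n : ℕ) (hn : 2 ≤ n)
    (X : (d : ℕ) → Ω → Matrix (Fin n × Fin d) (Fin n × Fin d) ℂ)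
    (hmeas : ∀ d, Measurable (X d))
    (hpsd : ∀ d ω, (X d ω).PosSemidef)
    (hUI : UnitInv ℙ n X)
    (μ : Measure ℝ) [IsProbabilityMeasure μ]
    (A B m σ : ℝ) (hA : 0 ≤ A) (hσ : 0 ≤ σ)
    (hsupp : msupport μ ⊆ Set.Icc A B)
    (hmean : (∫ x, x ∂μ) = m)
    (hvar : (∫ x, x ^ 2 ∂μ) - m ^ 2 = σ ^ 2)
    (hconv : StrongConv ℙ n X μ)
    (hcond : A > ((n : ℝ) ^ 2 - 2) * (B - m) + 2 * σ * Real.sqrt ((n : ℝ) ^ 2 - 2)) :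
    (∀ᵐ ω ∂ℙ, ∀ᶠ d : ℕ in atTop, X d ω ∈ SEP n d) ∧
      Tendsto (fun d : ℕ => ℙ {ω | X d ω ∈ SEP n d}) atTop (𝓝 1) := by
  exact stmt2_general ℙ n hn X hmeas (fun d ω => (hpsd d ω).isHermitian) hUI μ A B m σ hσ
    hsupp hmean hvar hconv hcond
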